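/- Let w be an admissible weight on G such that the function |∇_H w| / ((1 + N) w) is essentially bounded on G. Then the weighted sub-Laplacian with domain C_c^∞(G,ℂ) ⊆ L²(G, w dy), defined by φ ↦ L φ − (∇_H w / w) · ∇_H φ, is essentially self-adjoint on L²(G, w dy): its closure is self-adjoint (equivalently, its adjoint is self-adjoint). -/

import Mathlib

/-!
A densely defined symmetric operator `T ≥ 0` is essentially self-adjoint as soon as `T + 1` has
dense range (`isSelfAdjoint_adjoint_of_nonneg`). For the weighted sub-Laplacian, symmetry and
nonnegativity are Green's formula `⟨T φ, ψ⟩ = ∑ⱼ ∫ w · conj (X_j φ) · X_j ψ` (`green`), a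
consequence of the definition of the weak gradient. Dense range is a Liouville property: if
`u ∈ L²(w dy)` satisfies `(T + 1) u = 0` weakly, then `u = 0` (`eq_zero_of_weak`, stated for
`v = w u`, in terms of which the equation reads `∑ⱼ X_j (X_j v - u g_j) = v`, `g = ∇_H w`).

No regularity of `u` is available, since `w` is rough. The functions `w`, `v`, `g_j`, `u g_j` are
therefore mollified with the kernels `ρ_k (x · y⁻¹)`, which commute with the left-invariant fields
`X_j` (`flowInv_gdiv`, `kint_weak_eq`). With `W, V, F_j` the mollifications of `w, v, u g_j`, the
function `V` solves `∑ⱼ X_j (X_j V - F_j) = V` classically, and testing with `χ² V / W` gives a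
Caccioppoli inequality with an error term built from `(V / W) X_j W - F_j` (`energy_ineq`). The
error vanishes pointwise almost everywhere as `k → ∞`. On a compact set the hypothesis gives
`|∇_H w| ≤ B w`, so by Cauchy–Schwarz the error is bounded by a multiple of the mollification of
`u² w` (`error_le`), whose integral is exactly that of `u² w` (`lintegral_kint_gdiv`). Fatou's
lemma then yields, for `0 ≤ χ ≤ 1`, the inequality `∫ χ² u² w ≤ 3 sup |∇_H χ|² ∫ u² w`
(`caccioppoli`). Only the supremum of `|∇_H χ|` enters, and it tends to zero along the dilates of
a fixed bump (`exists_cutoffs`), so `∫ u² w = 0`.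
-/

open MeasureTheory Filter
open scoped BigOperators ENNReal NNReal

noncomputable section

/-- Points of the Métivier group `G = ℝ^{2n} × ℝ^m`. -/
abbrev GrpPt (n m : ℕ) := (Fin (2*n) → ℝ) × (Fin m → ℝ)

/-- Euclidean norm on `Fin k → ℝ`. -/
def e2norm {k : ℕ} (x : Fin k → ℝ) : ℝ := Real.sqrt (∑ i, (x i)^2)

/-- Kaplan norm `N(x,t) = (|x|^4 + 16|t|^2)^(1/4)`. -/
def kN {n m : ℕ} (p : GrpPt n m) : ℝ := (e2norm p.1 ^ 4 + 16 * e2norm p.2 ^ 2) ^ ((1:ℝ)/4)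

/-- Group multiplication of the Métivier group. -/
def gmul {n m : ℕ} (J : Fin m → Matrix (Fin (2*n)) (Fin (2*n)) ℝ) (p q : GrpPt n m) : GrpPt n m :=
  (p.1 + q.1, p.2 + q.2 + fun k => (1/2 : ℝ) * ∑ i, (J k).mulVec p.1 i * q.1 i)

/-- Horizontal left-invariant vector field `X_j`. -/
def XD {n m : ℕ} (J : Fin m → Matrix (Fin (2*n)) (Fin (2*n)) ℝ)
    {E : Type*} [NormedAddCommGroup E] [NormedSpace ℝ E]
    (j : Fin (2*n)) (f : GrpPt n m → E) (p : GrpPt n m) : E :=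
  fderiv ℝ f p (Pi.single j 1, 0)
    + (1/2 : ℝ) • ∑ k, ((J k).mulVec p.1 j) • fderiv ℝ f p (0, Pi.single k 1)

/-- Squared length of the horizontal gradient. -/
def gradSq {n m : ℕ} (J : Fin m → Matrix (Fin (2*n)) (Fin (2*n)) ℝ)
    (f : GrpPt n m → ℝ) (p : GrpPt n m) : ℝ := ∑ j, (XD J j f p)^2

/-- Sub-Laplacian `L f = -∑ X_j (X_j f)`. -/
def LSub {n m : ℕ} (J : Fin m → Matrix (Fin (2*n)) (Fin (2*n)) ℝ)
    {E : Type*} [NormedAddCommGroup E] [NormedSpace ℝ E]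
    (f : GrpPt n m → E) (p : GrpPt n m) : E := - ∑ j, XD J j (XD J j f) p

/-- Weight `w_α = exp (-N^α)`. -/
def wA {n m : ℕ} (α : ℝ) (p : GrpPt n m) : ℝ := Real.exp (-(kN p ^ α))

/-- Potential `V_α = -(1/4) |grad w_α|²/w_α² - (1/2) (L w_α)/w_α`. -/
def VA {n m : ℕ} (J : Fin m → Matrix (Fin (2*n)) (Fin (2*n)) ℝ) (α : ℝ) (p : GrpPt n m) : ℝ :=
  -(1/4) * gradSq J (wA α) p / (wA α p)^2 - (1/2) * LSub J (wA α) p / wA α p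

/-- The weighted measure `w(y) dy`. -/
def wMeasure {n m : ℕ} (w : GrpPt n m → ℝ) : Measure (GrpPt n m) :=
  (volume : Measure (GrpPt n m)).withDensity (fun y => ENNReal.ofReal (w y))


/-! ### A criterion for essential self-adjointness -/

/-- A nonnegative symmetric operator is essentially self-adjoint if the range of `T + 1` is
dense. As `‖x‖ ≤ ‖(T + 1) x‖`, approximating `(T* + 1) u` from that range produces elements of the
domain of `T` converging to `u` in the graph norm, so `T*` is symmetric. -/
theorem isSelfAdjoint_adjoint_of_nonneg {H : Type*} [NormedAddCommGroup H]
    [InnerProductSpace ℂ H] [CompleteSpace H] (T : H →ₗ.[ℂ] H)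
    (hT : Dense (T.domain : Set H))
    (hsymm : ∀ x y : T.domain, inner ℂ (T x) (y : H) = inner ℂ (x : H) (T y))
    (hpos : ∀ x : T.domain, 0 ≤ (inner ℂ (T x) (x : H)).re)
    (hker : ∀ v : H, (∀ x : T.domain, inner ℂ v (T x + x) = 0) → v = 0) :
    IsSelfAdjoint T.adjoint := by
  classical
  set S : T.domain →ₗ[ℂ] H := T.toFun + T.domain.subtype with hS
  have hSx : ∀ x : T.domain, S x = T x + x := fun x => rfl
  have hnorm : ∀ x : T.domain, ‖(x : H)‖ ≤ ‖S x‖ := by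
    intro x
    have h1 : ‖(x : H)‖ ^ 2 ≤ (inner ℂ (S x) (x : H)).re := by
      rw [hSx, inner_add_left, Complex.add_re]
      have := inner_self_eq_norm_sq (𝕜 := ℂ) (x : H)
      have h2 := hpos x
      simp only [RCLike.re_to_complex] at this
      linarith
    have h2 : (inner ℂ (S x) (x : H)).re ≤ ‖S x‖ * ‖(x : H)‖ := re_inner_le_norm (𝕜 := ℂ) _ _
    by_contra hlt
    push Not at hlt
    have := norm_nonneg (S x)
    nlinarith
  have hdense : Dense (LinearMap.range S : Set H) := by
    rw [Submodule.dense_iff_topologicalClosure_eq_top,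
      Submodule.topologicalClosure_eq_top_iff, Submodule.eq_bot_iff]
    intro v hv
    refine hker v fun x => ?_
    rw [← hSx]
    exact (Submodule.mem_orthogonal' _ v).1 hv _ ⟨x, rfl⟩
  -- every element of the adjoint domain is a graph limit of elements of the domain
  have happrox : ∀ u : T.adjoint.domain, ∃ φ : ℕ → T.domain,
      Tendsto (fun k => (φ k : H)) atTop (nhds (u : H)) ∧
      Tendsto (fun k => T (φ k)) atTop (nhds (T.adjoint u)) := by
    intro u
    obtain ⟨s, hs, hlim⟩ := mem_closure_iff_seq_limit.1 (hdense (T.adjoint u + u))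
    choose φ hφ using hs
    have hc : CauchySeq (fun k => (φ k : H)) := by
      have := hlim.cauchySeq
      rw [Metric.cauchySeq_iff] at this ⊢
      intro ε hε
      obtain ⟨N, hN⟩ := this ε hε
      refine ⟨N, fun a ha b hb => lt_of_le_of_lt ?_ (hN a ha b hb)⟩
      rw [dist_eq_norm, dist_eq_norm, ← hφ, ← hφ, ← map_sub]
      exact hnorm (φ a - φ b)
    obtain ⟨u', hu'⟩ := cauchySeq_tendsto_of_complete hc
    have hT' : Tendsto (fun k => T (φ k)) atTop (nhds (T.adjoint u + u - u')) := by
      refine (hlim.sub hu').congr fun k => ?_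
      rw [← hφ, hSx, add_sub_cancel_right]
    have huu : (u : H) = u' := by
      rw [← sub_eq_zero]
      refine hker _ fun x => ?_
      have h1 : inner ℂ u' (T x + x) = inner ℂ (T.adjoint u + u) (x : H) := by
        have h2 : Tendsto (fun k => inner ℂ (φ k : H) (T x + x)) atTop
          (nhds (inner ℂ u' (T x + x))) := hu'.inner tendsto_const_nhds
        have h3 : Tendsto (fun k => inner ℂ (s k) (x : H)) atTop
          (nhds (inner ℂ (T.adjoint u + u) (x : H))) := hlim.inner tendsto_const_nhds
        refine tendsto_nhds_unique h2 (h3.congr fun k => ?_)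
        rw [← hφ, hSx, inner_add_left, inner_add_right, hsymm]
      rw [inner_sub_left, h1, inner_add_left, inner_add_right,
        LinearPMap.adjoint_isFormalAdjoint hT u x, sub_self]
    refine ⟨φ, huu ▸ hu', ?_⟩
    rw [← huu] at hT'
    simpa using hT'
  have hle : T ≤ T.adjoint := LinearPMap.IsFormalAdjoint.le_adjoint hT hsymm
  have hdense' : Dense (T.adjoint.domain : Set H) := hT.mono hle.1
  have hself : T.adjoint.IsFormalAdjoint T.adjoint := by
    intro a b
    obtain ⟨φ, h1, h2⟩ := happrox a
    have h3 : Tendsto (fun k => inner ℂ (T (φ k)) (b : H)) atTop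
      (nhds (inner ℂ (T.adjoint a) (b : H))) := h2.inner tendsto_const_nhds
    have h4 : Tendsto (fun k => inner ℂ (φ k : H) (T.adjoint b)) atTop
      (nhds (inner ℂ (a : H) (T.adjoint b))) := h1.inner tendsto_const_nhds
    refine tendsto_nhds_unique h3 (h4.congr fun k => ?_)
    exact ((LinearPMap.adjoint_isFormalAdjoint hT).symm (φ k) b).symm
  rw [LinearPMap.isSelfAdjoint_def]
  refine le_antisymm ?_ (LinearPMap.IsFormalAdjoint.le_adjoint hdense' hself)
  refine LinearPMap.IsFormalAdjoint.le_adjoint hT fun x y => ?_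
  have h5 := (LinearPMap.adjoint_isFormalAdjoint hdense').symm ⟨x, hle.1 x.2⟩ y
  rw [← h5, hle.2 (x := x) (y := ⟨x, hle.1 x.2⟩) rfl]

/-! ### Calculus of the horizontal fields -/

/-- The direction of the horizontal field `X_j` at the point `p`. -/
def hvec {n m : ℕ} (J : Fin m → Matrix (Fin (2*n)) (Fin (2*n)) ℝ) (j : Fin (2*n))
    (p : GrpPt n m) : GrpPt n m :=
  (Pi.single j 1, fun k => (1/2 : ℝ) * (J k).mulVec p.1 j)

instance instHaarGrpPt {n m : ℕ} : (volume : Measure (GrpPt n m)).IsAddHaarMeasure :=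
  Measure.prod.instIsAddHaarMeasure _ _

section Calculus

variable {n m : ℕ} (J : Fin m → Matrix (Fin (2*n)) (Fin (2*n)) ℝ) (j : Fin (2*n))
variable {E F : Type*} [NormedAddCommGroup E] [NormedSpace ℝ E]
  [NormedAddCommGroup F] [NormedSpace ℝ F]

theorem hvec_eq (p : GrpPt n m) : hvec J j p =
    (Pi.single j 1, 0) + (1/2 : ℝ) • ∑ k, ((J k).mulVec p.1 j) •
      ((0, Pi.single k 1) : GrpPt n m) := by
  have h : ∀ k : Fin m, ((J k).mulVec p.1 j) • ((0, Pi.single k 1) : GrpPt n m) =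
      (0, Pi.single k ((J k).mulVec p.1 j)) := by
    intro k
    ext i
    · simp
    · simp [Pi.single_apply]
  simp_rw [h]
  ext i
  · simp [hvec, Prod.fst_sum]
  · simp [hvec, Prod.snd_sum, Finset.sum_apply, Pi.single_apply]

theorem XD_eq (f : GrpPt n m → E) (p : GrpPt n m) :
    XD J j f p = fderiv ℝ f p (hvec J j p) := by
  rw [hvec_eq]
  simp only [map_add, map_smul, map_sum, XD]

theorem contDiff_mulVec (k : Fin m) {X : Type*} [NormedAddCommGroup X] [NormedSpace ℝ X]
    {f : X → (Fin (2*n) → ℝ)} (hf : ContDiff ℝ (⊤ : ℕ∞) f) (i : Fin (2*n)) :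
    ContDiff ℝ (⊤ : ℕ∞) (fun p => (J k).mulVec (f p) i) := by
  simp only [Matrix.mulVec, dotProduct]
  fun_prop

theorem contDiff_hvec : ContDiff ℝ (⊤ : ℕ∞) (hvec J j : GrpPt n m → GrpPt n m) := by
  unfold hvec
  refine contDiff_const.prodMk (contDiff_pi.2 fun k => contDiff_const.mul ?_)
  exact contDiff_mulVec J k contDiff_fst j

theorem contDiff_XD {f : GrpPt n m → E} (hf : ContDiff ℝ (⊤ : ℕ∞) f) :
    ContDiff ℝ (⊤ : ℕ∞) (XD J j f) := by
  have : XD J j f = fun p => fderiv ℝ f p (hvec J j p) := funext (XD_eq J j f)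
  rw [this]
  exact (hf.fderiv_right (m := (⊤ : ℕ∞)) (by simp)).clm_apply (contDiff_hvec J j)

theorem hasCompactSupport_XD {f : GrpPt n m → E} (hf : HasCompactSupport f) :
    HasCompactSupport (XD J j f) := by
  refine (hf.fderiv (𝕜 := ℝ)).mono fun p hp => ?_
  contrapose! hp
  simp only [Function.mem_support, not_not] at hp ⊢
  rw [XD_eq, hp]
  rfl

theorem contDiff_LSub {f : GrpPt n m → E} (hf : ContDiff ℝ (⊤ : ℕ∞) f) :
    ContDiff ℝ (⊤ : ℕ∞) (LSub J f) :=
  (ContDiff.sum fun j _ => contDiff_XD J j (contDiff_XD J j hf)).neg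

theorem XD_clm_comp (L : E →L[ℝ] F) {f : GrpPt n m → E} (hf : Differentiable ℝ f) :
    XD J j (fun p => L (f p)) = fun p => L (XD J j f p) := by
  ext p
  have h : HasFDerivAt (fun p => L (f p)) (L.comp (fderiv ℝ f p)) p :=
    L.hasFDerivAt.comp p (hf p).hasFDerivAt
  rw [XD_eq, XD_eq, h.fderiv]
  rfl

theorem XD_add {f g : GrpPt n m → E} {p : GrpPt n m} (hf : DifferentiableAt ℝ f p)
    (hg : DifferentiableAt ℝ g p) :
    XD J j (fun p => f p + g p) p = XD J j f p + XD J j g p := by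
  simp only [XD_eq]
  rw [fderiv_fun_add hf hg]
  rfl

theorem XD_sub {f g : GrpPt n m → E} {p : GrpPt n m} (hf : DifferentiableAt ℝ f p)
    (hg : DifferentiableAt ℝ g p) :
    XD J j (fun p => f p - g p) p = XD J j f p - XD J j g p := by
  simp only [XD_eq]
  rw [fderiv_fun_sub hf hg]
  rfl

theorem XD_mul {A : Type*} [NormedCommRing A] [NormedAlgebra ℝ A]
    {f g : GrpPt n m → A} {p : GrpPt n m} (hf : DifferentiableAt ℝ f p)
    (hg : DifferentiableAt ℝ g p) :
    XD J j (fun p => f p * g p) p = f p * XD J j g p + XD J j f p * g p := by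
  simp only [XD_eq]
  rw [fderiv_fun_mul hf hg]
  simp [mul_comm]

theorem LSub_clm_comp (L : E →L[ℝ] F) {f : GrpPt n m → E} (hf : ContDiff ℝ (⊤ : ℕ∞) f) :
    LSub J (fun p => L (f p)) = fun p => L (LSub J f p) := by
  ext p
  simp only [LSub, map_neg, map_sum]
  congr 1
  refine Finset.sum_congr rfl fun i _ => ?_
  rw [XD_clm_comp J i L (hf.differentiable (by simp)),
    XD_clm_comp J i L ((contDiff_XD J i hf).differentiable (by simp))]

/-- The horizontal fields are divergence-free. -/
theorem integral_XD_eq_zero {f : GrpPt n m → ℝ} (hf : ContDiff ℝ (⊤ : ℕ∞) f)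
    (hc : HasCompactSupport f) : ∫ p, XD J j f p = 0 := by
  have hfd : Differentiable ℝ f := hf.differentiable (by simp)
  have hcont : ∀ v : GrpPt n m, Continuous fun p => fderiv ℝ f p v := fun v =>
    (hf.continuous_fderiv (by simp)).clm_apply continuous_const
  have hcs : ∀ v : GrpPt n m, HasCompactSupport fun p => fderiv ℝ f p v := fun v =>
    hc.fderiv_apply (𝕜 := ℝ) v
  have hmv : ∀ k : Fin m, ContDiff ℝ (⊤ : ℕ∞) (fun p : GrpPt n m => (J k).mulVec p.1 j) :=
    fun k => contDiff_mulVec J k contDiff_fst j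
  have key : ∀ (a : GrpPt n m → ℝ) (v : GrpPt n m), ContDiff ℝ (⊤ : ℕ∞) a →
      (∀ p, fderiv ℝ a p v = 0) → Integrable (fun p => a p * fderiv ℝ f p v) ∧
      ∫ p, a p * fderiv ℝ f p v = 0 := by
    intro a v ha hav
    have hi : Integrable (fun p => a p * fderiv ℝ f p v) :=
      (ha.continuous.mul (hcont v)).integrable_of_hasCompactSupport (hcs v).mul_left
    refine ⟨hi, ?_⟩
    rw [integral_mul_fderiv_eq_neg_fderiv_mul_of_integrable _ hi _
      (fun p _ => ha.differentiable (by simp) p) (fun p _ => hfd p)]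
    · simp [hav]
    · simp [hav]
    · exact (ha.continuous.mul hf.continuous).integrable_of_hasCompactSupport hc.mul_left
  have h1 := key (fun _ => 1) (Pi.single j 1, 0) contDiff_const (by simp)
  have h2 : ∀ k : Fin m, _ := fun k => key (fun p => (J k).mulVec p.1 j) (0, Pi.single k 1)
    (hmv k) (by
      intro p
      have hd := (hmv k).differentiable (by simp) p
      -- the coefficients of `X_j` depend only on the first factor
      rw [← hd.lineDeriv_eq_fderiv, lineDeriv]
      simp)
  simp only [one_mul] at h1
  unfold XD
  rw [integral_add h1.1, h1.2, integral_smul, integral_finsetSum]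
  · simp only [smul_eq_mul]
    simp [h2]
  · intro k _
    exact (h2 k).1
  · exact Integrable.smul (1/2 : ℝ) (integrable_finsetSum _ fun k _ => (h2 k).1)

end Calculus

/-! ### Integral operators and group convolution kernels -/

/-- The group quotient `x · y⁻¹`. -/
def gdiv {n m : ℕ} (J : Fin m → Matrix (Fin (2*n)) (Fin (2*n)) ℝ) (x y : GrpPt n m) :
    GrpPt n m :=
  (x.1 - y.1, fun k => x.2 k - (1/2 : ℝ) * ∑ i, (J k).mulVec x.1 i * y.1 i - y.2 k)

/-- The group product `z⁻¹ · x`, written so that it inverts `gdiv` in its second argument. -/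
def gsol {n m : ℕ} (J : Fin m → Matrix (Fin (2*n)) (Fin (2*n)) ℝ) (z x : GrpPt n m) :
    GrpPt n m :=
  (x.1 - z.1, fun k => x.2 k - (1/2 : ℝ) * ∑ i, (J k).mulVec x.1 i * (x.1 i - z.1 i) - z.2 k)

/-- A smooth kernel on `G × G` such that the sections `Ψ(x, ·)` have a common compact support
as long as `x` stays in a compact set. -/
def IsKer {n m : ℕ} (Ψ : GrpPt n m → GrpPt n m → ℝ) : Prop :=
  ContDiff ℝ (⊤ : ℕ∞) (fun q : GrpPt n m × GrpPt n m => Ψ q.1 q.2) ∧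
    ∀ K : Set (GrpPt n m), IsCompact K → ∃ K' : Set (GrpPt n m), IsCompact K' ∧
      ∀ x ∈ K, ∀ y, y ∉ K' → Ψ x y = 0

/-- The integral operator with kernel `Ψ`. -/
def kint {n m : ℕ} (Ψ : GrpPt n m → GrpPt n m → ℝ) (f : GrpPt n m → ℝ) (x : GrpPt n m) : ℝ :=
  ∫ y, Ψ x y * f y

section Kernel

variable {n m : ℕ} (J : Fin m → Matrix (Fin (2*n)) (Fin (2*n)) ℝ) (j : Fin (2*n))
variable {Ψ : GrpPt n m → GrpPt n m → ℝ} {f : GrpPt n m → ℝ}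

/-- The horizontal field acting on the first variable of a kernel. -/
def kXD (Ψ : GrpPt n m → GrpPt n m → ℝ) (x y : GrpPt n m) : ℝ :=
  XD J j (fun x' => Ψ x' y) x

theorem IsKer.contDiff_fst (h : IsKer Ψ) (y : GrpPt n m) :
    ContDiff ℝ (⊤ : ℕ∞) (fun x => Ψ x y) :=
  h.1.comp (contDiff_id.prodMk contDiff_const)

theorem IsKer.contDiff_snd (h : IsKer Ψ) (x : GrpPt n m) :
    ContDiff ℝ (⊤ : ℕ∞) (fun y => Ψ x y) :=
  h.1.comp (contDiff_const.prodMk contDiff_id)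

theorem IsKer.hasCompactSupport (h : IsKer Ψ) (x : GrpPt n m) :
    HasCompactSupport (fun y => Ψ x y) := by
  obtain ⟨K', hK', h0⟩ := h.2 {x} isCompact_singleton
  exact HasCompactSupport.intro hK' fun y hy => h0 x rfl y hy

theorem IsKer.integrable (h : IsKer Ψ) (hf : LocallyIntegrable f) (x : GrpPt n m) :
    Integrable (fun y => Ψ x y * f y) := by
  have := hf.integrable_smul_left_of_hasCompactSupport (h.contDiff_snd x).continuous
    (h.hasCompactSupport x)
  simpa only [smul_eq_mul] using this

theorem IsKer.kXD_fderiv (h : IsKer Ψ) (x y : GrpPt n m) :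
    fderiv ℝ (fun x' => Ψ x' y) x =
      (fderiv ℝ (fun q : GrpPt n m × GrpPt n m => Ψ q.1 q.2) (x, y)).comp
        (ContinuousLinearMap.inl ℝ _ _) := by
  have h1 := (h.1.differentiable (by simp) (x, y)).hasFDerivAt
  have h2 : HasFDerivAt (fun x' : GrpPt n m => (x', y)) (ContinuousLinearMap.inl ℝ _ _) x :=
    hasFDerivAt_prodMk_left x y
  have h3 := HasFDerivAt.comp x h1 h2
  exact h3.fderiv

theorem IsKer.kXD (h : IsKer Ψ) : IsKer (kXD J j Ψ) := by
  constructor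
  · have : (fun q : GrpPt n m × GrpPt n m => _root_.kXD J j Ψ q.1 q.2) = fun q =>
        fderiv ℝ (fun q : GrpPt n m × GrpPt n m => Ψ q.1 q.2) q (hvec J j q.1, 0) := by
      ext q
      rw [_root_.kXD, XD_eq, h.kXD_fderiv]
      simp
    rw [this]
    exact (h.1.fderiv_right (m := (⊤ : ℕ∞)) (by simp)).clm_apply
      (((contDiff_hvec J j).comp _root_.contDiff_fst).prodMk contDiff_const)
  · intro K hK
    obtain ⟨L, hL, hKL⟩ := exists_compact_superset hK
    obtain ⟨K', hK', h0⟩ := h.2 L hL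
    refine ⟨K', hK', fun x hx y hy => ?_⟩
    have : (fun x' => Ψ x' y) =ᶠ[nhds x] fun _ => 0 := by
      filter_upwards [mem_interior_iff_mem_nhds.1 (hKL hx)] with x' hx'
      exact h0 x' hx' y hy
    rw [_root_.kXD, XD_eq, this.fderiv_eq]
    simp

/-- Smooth kernels regularize. Up to the change of variables `y ↦ -y`, the integral is the value
at `0` of a convolution depending smoothly on a parameter. -/
theorem IsKer.contDiff_kint (h : IsKer Ψ) (hf : LocallyIntegrable f) :
    ContDiff ℝ (⊤ : ℕ∞) (kint Ψ f) := by
  rw [contDiff_iff_contDiffAt]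
  intro x₀
  obtain ⟨L, hL, hxL⟩ := exists_compact_mem_nhds x₀
  obtain ⟨K', hK', h0⟩ := h.2 L hL
  have hc : ContDiff ℝ (⊤ : ℕ∞) (fun q : GrpPt n m × GrpPt n m => Ψ q.1 (-q.2)) :=
    h.1.comp (_root_.contDiff_fst.prodMk _root_.contDiff_snd.neg)
  have key := contDiffOn_convolution_right_with_param_comp (n := (⊤ : ℕ∞)) (μ := volume)
    (ContinuousLinearMap.mul ℝ ℝ) (s := interior L) (v := fun _ : GrpPt n m => (0 : GrpPt n m))
    contDiffOn_const (f := f) (g := fun x z => Ψ x (-z)) (k := -K') isOpen_interior hK'.neg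
    (fun p z hp hz => h0 p (interior_subset hp) _ (by simpa using hz)) hf hc.contDiffOn
  have h2 : (fun x => (convolution f (fun z => Ψ x (-z)) (ContinuousLinearMap.mul ℝ ℝ) volume) 0)
      = kint Ψ f := by
    ext x
    simp [convolution, kint, mul_comm]
  rw [h2] at key
  exact key.contDiffAt (isOpen_interior.mem_nhds (mem_interior_iff_mem_nhds.2 hxL))

/-- Differentiation under the integral sign. -/
theorem IsKer.XD_kint (h : IsKer Ψ) (hf : LocallyIntegrable f) :
    XD J j (kint Ψ f) = kint (_root_.kXD J j Ψ) f := by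
  ext x₀
  obtain ⟨L, hL, hxL⟩ := exists_compact_mem_nhds x₀
  obtain ⟨K', hK', h0⟩ := h.2 L hL
  set D : GrpPt n m → GrpPt n m → (GrpPt n m →L[ℝ] ℝ) :=
    fun x y => fderiv ℝ (fun x' => Ψ x' y) x with hD
  have hDc : Continuous fun q : GrpPt n m × GrpPt n m => D q.1 q.2 := by
    simp only [hD, h.kXD_fderiv]
    exact (h.1.continuous_fderiv (by simp)).clm_comp continuous_const
  have hD0 : ∀ x ∈ interior L, ∀ y, y ∉ K' → D x y = 0 := by
    intro x hx y hy
    have : (fun x' => Ψ x' y) =ᶠ[nhds x] fun _ => 0 := by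
      filter_upwards [mem_interior_iff_mem_nhds.1 hx] with x' hx'
      exact h0 x' hx' y hy
    simp [hD, this.fderiv_eq]
  obtain ⟨C, hC⟩ := (hL.prod hK').exists_bound_of_continuousOn hDc.continuousOn
  have hDint : HasFDerivAt (kint Ψ f) (∫ y, f y • D x₀ y) x₀ := by
    refine hasFDerivAt_integral_of_dominated_of_fderiv_le (𝕜 := ℝ)
      (F' := fun x y => f y • D x y)
      (bound := fun y => K'.indicator (fun y => C * ‖f y‖) y)
      (interior_mem_nhds.2 hxL) ?_ ?_ ?_ ?_ ?_ ?_
    · exact Eventually.of_forall fun x => (h.integrable hf x).aestronglyMeasurable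
    · exact h.integrable hf x₀
    · exact hf.aestronglyMeasurable.smul
        (hDc.comp (continuous_const.prodMk continuous_id)).aestronglyMeasurable
    · refine Eventually.of_forall fun y x hx => ?_
      by_cases hy : y ∈ K'
      · rw [Set.indicator_of_mem hy, norm_smul, mul_comm]
        exact mul_le_mul_of_nonneg_right (hC (x, y) ⟨interior_subset hx, hy⟩) (norm_nonneg _)
      · simp [hD0 x hx y hy, hy]
    · rw [integrable_indicator_iff hK'.measurableSet]
      exact ((hf.integrableOn_isCompact hK').norm).const_mul C
    · refine Eventually.of_forall fun y x _ => ?_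
      have := ((h.contDiff_fst y).differentiable (by simp) x).hasFDerivAt
      exact this.mul_const (f y)
  rw [XD_eq, hDint.fderiv]
  have hi : Integrable fun y => f y • D x₀ y := by
    refine (hf.integrable_smul_right_of_hasCompactSupport
      (hDc.comp (continuous_const.prodMk continuous_id)) ?_)
    exact HasCompactSupport.intro hK' fun y hy =>
      hD0 x₀ (mem_interior_iff_mem_nhds.2 hxL) y hy
  rw [ContinuousLinearMap.integral_apply hi]
  refine integral_congr_ae (Eventually.of_forall fun y => ?_)
  simp only [_root_.kXD, XD_eq, hD]
  simp [mul_comm]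

end Kernel

section GroupKernel

variable {n m : ℕ} (J : Fin m → Matrix (Fin (2*n)) (Fin (2*n)) ℝ) (j : Fin (2*n))

theorem skew_apply {J : Fin m → Matrix (Fin (2*n)) (Fin (2*n)) ℝ}
    (hskew : ∀ k, (J k).transpose = -(J k)) (k : Fin m) (a b : Fin (2*n)) :
    J k b a = - J k a b := by
  have := congrFun (congrFun (hskew k) a) b
  simpa [Matrix.transpose_apply] using this

theorem skew_sum {J : Fin m → Matrix (Fin (2*n)) (Fin (2*n)) ℝ}
    (hskew : ∀ k, (J k).transpose = -(J k)) (k : Fin m) (x y : Fin (2*n) → ℝ) :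
    ∑ i, (J k).mulVec x i * y i = - ∑ i, (J k).mulVec y i * x i := by
  have h1 : ∑ i, (J k).mulVec x i * y i = y ⬝ᵥ (J k).mulVec x := by
    simp [dotProduct, mul_comm]
  have h2 : ∑ i, (J k).mulVec y i * x i = x ⬝ᵥ (J k).mulVec y := by
    simp [dotProduct, mul_comm]
  rw [h1, h2, Matrix.dotProduct_mulVec, ← Matrix.mulVec_transpose, hskew, Matrix.neg_mulVec,
    neg_dotProduct, dotProduct_comm]

theorem gsol_gdiv (x y : GrpPt n m) : gsol J (gdiv J x y) x = y := by
  ext i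
  · simp [gsol, gdiv]
  · simp [gsol, gdiv]

theorem gdiv_self {J : Fin m → Matrix (Fin (2*n)) (Fin (2*n)) ℝ}
    (hskew : ∀ k, (J k).transpose = -(J k)) (x : GrpPt n m) : gdiv J x x = 0 := by
  ext k
  · simp [gdiv]
  · have := skew_sum hskew k x.1 x.1
    have h0 : ∑ i, (J k).mulVec x.1 i * x.1 i = 0 := by linarith
    simp [gdiv, h0]

theorem contDiff_gdiv :
    ContDiff ℝ (⊤ : ℕ∞) (fun q : GrpPt n m × GrpPt n m => gdiv J q.1 q.2) := by
  unfold gdiv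
  refine ContDiff.prodMk (by fun_prop) (contDiff_pi.2 fun k => ?_)
  have h : ∀ i, ContDiff ℝ (⊤ : ℕ∞)
      (fun q : GrpPt n m × GrpPt n m => (J k).mulVec q.1.1 i) :=
    fun i => contDiff_mulVec J k (contDiff_fst.comp contDiff_fst) i
  fun_prop

theorem contDiff_gsol :
    ContDiff ℝ (⊤ : ℕ∞) (fun q : GrpPt n m × GrpPt n m => gsol J q.1 q.2) := by
  unfold gsol
  refine ContDiff.prodMk (by fun_prop) (contDiff_pi.2 fun k => ?_)
  have h : ∀ i, ContDiff ℝ (⊤ : ℕ∞)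
      (fun q : GrpPt n m × GrpPt n m => (J k).mulVec q.2.1 i) :=
    fun i => contDiff_mulVec J k (contDiff_fst.comp contDiff_snd) i
  fun_prop

theorem gdiv_eq_zero_of_not_mem {ρ : GrpPt n m → ℝ} {S : Set (GrpPt n m)}
    (hρ : ∀ z, z ∉ S → ρ z = 0) {K : Set (GrpPt n m)} {x : GrpPt n m} (hx : x ∈ K)
    {y : GrpPt n m} (hy : y ∉ (fun q : GrpPt n m × GrpPt n m => gsol J q.1 q.2) '' (S ×ˢ K)) :
    ρ (gdiv J x y) = 0 := by
  refine hρ _ fun hz => hy ⟨(gdiv J x y, x), ⟨hz, hx⟩, gsol_gdiv J x y⟩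

theorem isKer_gdiv {ρ : GrpPt n m → ℝ} (hρ : ContDiff ℝ (⊤ : ℕ∞) ρ)
    (hc : HasCompactSupport ρ) : IsKer (fun x y => ρ (gdiv J x y)) := by
  refine ⟨hρ.comp (contDiff_gdiv J), fun K hK => ⟨_, (hc.isCompact.prod hK).image
    (contDiff_gsol J).continuous, fun x hx y hy => ?_⟩⟩
  exact gdiv_eq_zero_of_not_mem J (fun z hz => image_eq_zero_of_notMem_tsupport hz) hx hy

/-- The lines `x + s X_j(x)` are the integral curves of `X_j`: by skew symmetry, `X_j` is constant
along them. -/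
theorem hvec_line {J : Fin m → Matrix (Fin (2*n)) (Fin (2*n)) ℝ}
    (hskew : ∀ k, (J k).transpose = -(J k)) (x : GrpPt n m) (s : ℝ) :
    hvec J j (x + s • hvec J j x) = hvec J j x := by
  ext k
  · simp [hvec]
  · have : J k j j = 0 := by have := skew_apply hskew k j j; linarith
    simp [hvec, Matrix.mulVec_add, Matrix.mulVec_smul, this]

/-- The right translation `x ↦ x · exp (s X_j)` can be moved to the second factor of `x · y⁻¹`;
this is why convolution kernels commute with left-invariant fields. -/
theorem gdiv_line {J : Fin m → Matrix (Fin (2*n)) (Fin (2*n)) ℝ}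
    (hskew : ∀ k, (J k).transpose = -(J k)) (x y : GrpPt n m) (s : ℝ) :
    gdiv J (x + s • hvec J j x) y = gdiv J x (y - s • hvec J j y) := by
  ext k
  · simp [hvec, gdiv]; ring
  · have h1 : ∑ i, J k i j * y.1 i = - (J k).mulVec y.1 j := by
      simp only [Matrix.mulVec, dotProduct, ← Finset.sum_neg_distrib]
      refine Finset.sum_congr rfl fun i _ => ?_
      rw [skew_apply hskew k j i]; ring
    simp only [gdiv, hvec, Prod.fst_add, Prod.snd_add, Prod.smul_fst, Prod.smul_snd,
      Prod.fst_sub, Prod.snd_sub, Pi.add_apply, Pi.sub_apply, Pi.smul_apply, smul_eq_mul,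
      Matrix.mulVec_add, Matrix.mulVec_smul, Matrix.mulVec_single_one, Matrix.col_apply,
      add_mul, mul_sub, Finset.sum_add_distrib, Finset.sum_sub_distrib, mul_assoc,
      ← Finset.mul_sum, h1]
    simp [Pi.single_apply]
    ring

/-- Invariance of a kernel under the simultaneous flow of `X_j` in both variables. -/
def FlowInv (Ψ : GrpPt n m → GrpPt n m → ℝ) : Prop :=
  ∀ x y (s : ℝ), Ψ (x + s • hvec J j x) y = Ψ x (y - s • hvec J j y)

theorem XD_eq_lineDeriv {f : GrpPt n m → ℝ} (hf : ContDiff ℝ (⊤ : ℕ∞) f) (p : GrpPt n m) :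
    XD J j f p = deriv (fun s : ℝ => f (p + s • hvec J j p)) 0 := by
  rw [XD_eq, ← (hf.differentiable (by simp) p).lineDeriv_eq_fderiv, lineDeriv]

/-- On flow-invariant kernels the field can be moved from one variable to the other, up to
sign. -/
theorem FlowInv.kXD_eq {Ψ : GrpPt n m → GrpPt n m → ℝ} (hk : IsKer Ψ) (h : FlowInv J j Ψ)
    (x y : GrpPt n m) : kXD J j Ψ x y = - XD J j (fun y' => Ψ x y') y := by
  rw [kXD, XD_eq_lineDeriv J j (hk.contDiff_fst y), XD_eq_lineDeriv J j (hk.contDiff_snd x)]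
  simp only [h x y]
  have := deriv_comp_neg (f := fun s : ℝ => Ψ x (y + s • hvec J j y)) (x := 0)
  simp only [neg_zero] at this
  rw [← this]
  simp [sub_eq_add_neg]

theorem FlowInv.kXD {J : Fin m → Matrix (Fin (2*n)) (Fin (2*n)) ℝ}
    (hskew : ∀ k, (J k).transpose = -(J k)) {Ψ : GrpPt n m → GrpPt n m → ℝ} (hk : IsKer Ψ)
    (h : FlowInv J j Ψ) : FlowInv J j (kXD J j Ψ) := by
  intro x y s
  rw [_root_.kXD, _root_.kXD, XD_eq_lineDeriv J j (hk.contDiff_fst _),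
    XD_eq_lineDeriv J j (hk.contDiff_fst _)]
  congr 1
  ext τ
  have h1 := h (x + τ • hvec J j x) y s
  rw [hvec_line j hskew] at h1
  rw [hvec_line j hskew, ← h1]
  congr 1
  abel

theorem flowInv_gdiv {J : Fin m → Matrix (Fin (2*n)) (Fin (2*n)) ℝ}
    (hskew : ∀ k, (J k).transpose = -(J k)) (ρ : GrpPt n m → ℝ) :
    FlowInv J j (fun x y => ρ (gdiv J x y)) := fun x y s => by
  simp only [gdiv_line j hskew]

theorem measurePreserving_gdiv_left (y : GrpPt n m) :
    MeasurePreserving (fun x : GrpPt n m => gdiv J x y) := by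
  have hc : Continuous fun x : GrpPt n m => gdiv J x y :=
    (contDiff_gdiv J).continuous.comp (continuous_id.prodMk continuous_const)
  have := (measurePreserving_sub_right (volume : Measure (Fin (2*n) → ℝ)) y.1).skew_product
    (μc := (volume : Measure (Fin m → ℝ))) (μd := volume)
    (g := fun a t k => t k - (1/2 : ℝ) * ∑ i, (J k).mulVec a i * y.1 i - y.2 k) ?_ ?_
  · exact this
  · have h2 : Continuous fun x : GrpPt n m => (gdiv J x y).2 := continuous_snd.comp hc
    exact h2.measurable
  · refine Eventually.of_forall fun a => ?_
    have := (measurePreserving_sub_right (volume : Measure (Fin m → ℝ))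
      ((fun k => (1/2 : ℝ) * ∑ i, (J k).mulVec a i * y.1 i) + y.2)).map_eq
    convert this using 2
    ext t k
    simp only [Pi.sub_apply, Pi.add_apply]
    ring

theorem measurePreserving_gdiv_right (x : GrpPt n m) :
    MeasurePreserving (fun y : GrpPt n m => gdiv J x y) := by
  have hc : Continuous fun y : GrpPt n m => gdiv J x y :=
    (contDiff_gdiv J).continuous.comp (continuous_const.prodMk continuous_id)
  have := (Measure.measurePreserving_sub_left (volume : Measure (Fin (2*n) → ℝ))
    x.1).skew_product (μc := (volume : Measure (Fin m → ℝ))) (μd := volume)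
    (g := fun a t k => x.2 k - (1/2 : ℝ) * ∑ i, (J k).mulVec x.1 i * a i - t k) ?_ ?_
  · exact this
  · have h2 : Continuous fun y : GrpPt n m => (gdiv J x y).2 := continuous_snd.comp hc
    exact h2.measurable
  · refine Eventually.of_forall fun a => ?_
    have := (Measure.measurePreserving_sub_left (volume : Measure (Fin m → ℝ))
      (x.2 - fun k => (1/2 : ℝ) * ∑ i, (J k).mulVec x.1 i * a i)).map_eq
    convert this using 2
    ext t k
    rfl

end GroupKernel

/-! ### Mollification on the group -/

section Mollifier

variable {n m : ℕ}

theorem integral_gdiv_right (J : Fin m → Matrix (Fin (2*n)) (Fin (2*n)) ℝ) {ρ : GrpPt n m → ℝ}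
    (hρ : Continuous ρ) (x : GrpPt n m) : ∫ y, ρ (gdiv J x y) = ∫ z, ρ z := by
  have h := measurePreserving_gdiv_right J x
  conv_rhs => rw [← h.map_eq]
  rw [integral_map h.aemeasurable hρ.aestronglyMeasurable]

/-- Averaging against the kernel `ρ(x · y⁻¹)` preserves the total mass of nonnegative
functions. -/
theorem lintegral_kint_gdiv (J : Fin m → Matrix (Fin (2*n)) (Fin (2*n)) ℝ) {ρ f : GrpPt n m → ℝ}
    (hρ : ContDiff ℝ (⊤ : ℕ∞) ρ) (hc : HasCompactSupport ρ) (h0 : ∀ z, 0 ≤ ρ z)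
    (h1 : ∫ z, ρ z = 1) (hf : LocallyIntegrable f) (hfm : Measurable f) (hf0 : ∀ y, 0 ≤ f y) :
    ∫⁻ x, ENNReal.ofReal (kint (fun x y => ρ (gdiv J x y)) f x) =
      ∫⁻ y, ENNReal.ofReal (f y) := by
  have hk := isKer_gdiv J hρ hc
  have hm : Measurable fun q : GrpPt n m × GrpPt n m => ENNReal.ofReal (ρ (gdiv J q.1 q.2)) :=
    hk.1.continuous.measurable.ennreal_ofReal
  have hl : ∫⁻ z, ENNReal.ofReal (ρ z) = 1 := by
    rw [← ofReal_integral_eq_lintegral_ofReal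
      (hρ.continuous.integrable_of_hasCompactSupport hc) (Eventually.of_forall h0), h1]
    simp
  calc ∫⁻ x, ENNReal.ofReal (kint (fun x y => ρ (gdiv J x y)) f x)
      = ∫⁻ x, ∫⁻ y, ENNReal.ofReal (ρ (gdiv J x y)) * ENNReal.ofReal (f y) := by
        refine lintegral_congr fun x => ?_
        rw [kint, ofReal_integral_eq_lintegral_ofReal (hk.integrable hf x)
          (Eventually.of_forall fun y => mul_nonneg (h0 _) (hf0 y))]
        exact lintegral_congr fun y => ENNReal.ofReal_mul (h0 _)
    _ = ∫⁻ y, ∫⁻ x, ENNReal.ofReal (ρ (gdiv J x y)) * ENNReal.ofReal (f y) := by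
        refine lintegral_lintegral_swap ?_
        exact (hm.mul (hfm.comp measurable_snd).ennreal_ofReal).aemeasurable
    _ = ∫⁻ y, ENNReal.ofReal (f y) := by
        refine lintegral_congr fun y => ?_
        rw [lintegral_mul_const' _ _ ENNReal.ofReal_ne_top,
          (measurePreserving_gdiv_left J y).lintegral_comp
            (f := fun z => ENNReal.ofReal (ρ z)) hρ.continuous.measurable.ennreal_ofReal, hl,
          one_mul]

/-- Smooth bumps concentrating at the identity. -/
def mollBump (n m k : ℕ) : ContDiffBump (0 : GrpPt n m) where
  rIn := 1 / (2 * ((k : ℝ) + 1))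
  rOut := 1 / ((k : ℝ) + 1)
  rIn_pos := by positivity
  rIn_lt_rOut := by
    apply one_div_lt_one_div_of_lt <;> nlinarith [(Nat.cast_nonneg k : (0:ℝ) ≤ k)]

/-- Approximate identity: normalized bumps concentrating at the identity. -/
def moll (n m k : ℕ) : GrpPt n m → ℝ := (mollBump n m k).normed volume

theorem moll_contDiff (k : ℕ) : ContDiff ℝ (⊤ : ℕ∞) (moll n m k) :=
  (mollBump n m k).contDiff_normed

theorem moll_hasCompactSupport (k : ℕ) : HasCompactSupport (moll n m k) :=
  (mollBump n m k).hasCompactSupport_normed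

theorem moll_nonneg (k : ℕ) (z : GrpPt n m) : 0 ≤ moll n m k z :=
  (mollBump n m k).nonneg_normed z

theorem moll_integral (k : ℕ) : ∫ z, moll n m k z = 1 :=
  (mollBump n m k).integral_normed

theorem moll_eq_zero (k : ℕ) (z : GrpPt n m) (hz : z ∉ Metric.closedBall (0 : GrpPt n m) 1) :
    moll n m k z = 0 := by
  by_contra h
  have : z ∈ Function.support ((mollBump n m k).normed volume) := h
  rw [ContDiffBump.support_normed_eq] at this
  refine hz (Metric.closedBall_subset_closedBall ?_ (Metric.ball_subset_closedBall this))
  change 1 / ((k : ℝ) + 1) ≤ 1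
  rw [div_le_one (by positivity)]
  linarith [(Nat.cast_nonneg k : (0:ℝ) ≤ k)]

/-- Lebesgue differentiation for the group mollifiers: the sets `{y | x · y⁻¹ ∈ B(0, r)}` are
comparable to Euclidean balls around `x`, with constants depending on `x`. -/
theorem ae_tendsto_kint {J : Fin m → Matrix (Fin (2*n)) (Fin (2*n)) ℝ}
    (hskew : ∀ k, (J k).transpose = -(J k)) {f : GrpPt n m → ℝ} (hf : LocallyIntegrable f) :
    ∀ᵐ x, Tendsto (fun k => kint (fun x y => moll n m k (gdiv J x y)) f x) atTop
      (nhds (f x)) := by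
  filter_upwards [IsUnifLocDoublingMeasure.ae_tendsto_average_norm_sub (μ := volume) hf 1]
    with x hx
  -- `z ↦ z⁻¹ · x` is Lipschitz at the identity
  obtain ⟨A, hA0, hA⟩ : ∃ A > 0, ∀ᶠ z in nhds (0 : GrpPt n m), ‖gsol J z x - x‖ ≤ A * ‖z‖ := by
    have hd : DifferentiableAt ℝ (fun z : GrpPt n m => gsol J z x) 0 :=
      (((contDiff_gsol J).comp (contDiff_id.prodMk contDiff_const)).differentiable
        (by simp)) 0
    obtain ⟨A, hA0, hA⟩ := hd.isBigO_sub.exists_pos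
    refine ⟨A, hA0, ?_⟩
    filter_upwards [hA.bound] with z hz
    have h0 : gsol J 0 x = x := by
      conv_lhs => rw [← gdiv_self hskew x]
      exact gsol_gdiv J x x
    simpa [h0] using hz
  obtain ⟨ε, hε, hball⟩ := Metric.eventually_nhds_iff_ball.1 hA
  set r : ℕ → ℝ := fun k => 1 / ((k : ℝ) + 1) with hr
  have hrpos : ∀ k, 0 < r k := fun k => by simp only [hr]; positivity
  have hrlim : Tendsto r atTop (nhds 0) := tendsto_one_div_add_atTop_nhds_zero_nat
  have hδ : Tendsto (fun k => A * r k) atTop (nhdsWithin 0 (Set.Ioi 0)) := by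
    refine tendsto_nhdsWithin_iff.2 ⟨by simpa using hrlim.const_mul A, ?_⟩
    exact Eventually.of_forall fun k => mul_pos hA0 (hrpos k)
  have havg := hx (fun _ => x) (fun k => A * r k) hδ (Eventually.of_forall fun k => by
    simp only [one_mul]
    exact Metric.mem_closedBall_self (mul_pos hA0 (hrpos k)).le)
  set d := Module.finrank ℝ (GrpPt n m)
  have := tendsto_integral_smul_of_tendsto_average_norm_sub (μ := volume)
    (g := fun k y => moll n m k (gdiv J x y)) (2 ^ d * A ^ d) havg ?_ ?_ ?_ ?_
  · simpa only [smul_eq_mul, kint] using this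
  · exact Eventually.of_forall fun k => hf.integrableOn_isCompact (isCompact_closedBall _ _)
  · simp only [integral_gdiv_right J (moll_contDiff _).continuous, moll_integral]
    exact tendsto_const_nhds
  · filter_upwards [hrlim.eventually (gt_mem_nhds hε)] with k hk y hy
    have hz : gdiv J x y ∈ Function.support ((mollBump n m k).normed volume) := hy
    rw [ContDiffBump.support_normed_eq, mem_ball_zero_iff] at hz
    change ‖gdiv J x y‖ < r k at hz
    have h1 := hball (gdiv J x y) (mem_ball_zero_iff.2 (hz.trans hk))
    rw [gsol_gdiv] at h1
    rw [mem_closedBall_iff_norm]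
    exact h1.trans (mul_le_mul_of_nonneg_left hz.le hA0.le)
  · refine Eventually.of_forall fun k y => ?_
    rw [abs_of_nonneg (moll_nonneg _ _)]
    have h1 := (mollBump n m k).normed_le_div_measure_closedBall_rOut volume 2
      (le_of_eq (by simp only [mollBump]; field_simp)) (gdiv J x y)
    refine h1.trans (le_of_eq ?_)
    change 2 ^ d / volume.real (Metric.closedBall (0 : GrpPt n m) (r k)) = _
    rw [Measure.addHaar_real_closedBall _ _ (hrpos k).le,
      Measure.addHaar_real_closedBall _ _ (mul_pos hA0 (hrpos k)).le, mul_pow, mul_assoc,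
      mul_comm (2 ^ d : ℝ) (A ^ d)]
    exact (mul_div_mul_left _ _ (pow_pos hA0 _).ne').symm

end Mollifier

/-! ### Energy inequality for the mollified equation -/

section Energy

variable {n m : ℕ} {J : Fin m → Matrix (Fin (2*n)) (Fin (2*n)) ℝ}

theorem XD_sq {χ : GrpPt n m → ℝ} {p : GrpPt n m} (j : Fin (2*n)) (h : DifferentiableAt ℝ χ p) :
    XD J j (fun p => χ p ^ 2) p = 2 * χ p * XD J j χ p := by
  simp only [pow_two]
  rw [XD_mul J j h h]
  ring

/-- Caccioppoli inequality for smooth solutions of the perturbed equation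
`∑ X_j (X_j V - F_j) = V`: the solution is tested against `χ² V / W`. The error made by not
having `F_j = (V / W) X_j W` enters only through its square. -/
theorem energy_ineq {W V χ : GrpPt n m → ℝ} {F : Fin (2*n) → GrpPt n m → ℝ}
    (hW : ContDiff ℝ (⊤ : ℕ∞) W) (hV : ContDiff ℝ (⊤ : ℕ∞) V) (hW0 : ∀ p, 0 < W p)
    (hF : ∀ j, ContDiff ℝ (⊤ : ℕ∞) (F j)) (hχ : ContDiff ℝ (⊤ : ℕ∞) χ)
    (hc : HasCompactSupport χ)
    (heq : ∀ p, ∑ j, XD J j (fun q => XD J j V q - F j q) p = V p) :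
    Integrable (fun p => χ p ^ 2 * (V p ^ 2 / W p) - (3/2) * χ p ^ 2 *
        ∑ j, W p * (V p / W p * XD J j W p / W p - F j p / W p) ^ 2) ∧
    ∫ p, (χ p ^ 2 * (V p ^ 2 / W p) - (3/2) * χ p ^ 2 *
        ∑ j, W p * (V p / W p * XD J j W p / W p - F j p / W p) ^ 2) ≤
      ∫ p, 3 * (∑ j, XD J j χ p ^ 2) * (V p ^ 2 / W p) := by
  have hWne : ∀ p, W p ≠ 0 := fun p => (hW0 p).ne'
  have hd : ∀ {f : GrpPt n m → ℝ}, ContDiff ℝ (⊤ : ℕ∞) f → Differentiable ℝ f :=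
    fun h => h.differentiable (by simp)
  have hU : ContDiff ℝ (⊤ : ℕ∞) (fun p => V p / W p) := hV.div hW hWne
  have hX : ∀ j {f : GrpPt n m → ℝ}, ContDiff ℝ (⊤ : ℕ∞) f → ContDiff ℝ (⊤ : ℕ∞) (XD J j f) :=
    fun j _ h => contDiff_XD J j h
  have hZ : ∀ j, ContDiff ℝ (⊤ : ℕ∞) (fun q => XD J j V q - F j q) := fun j =>
    (hX j hV).sub (hF j)
  have hθ : ContDiff ℝ (⊤ : ℕ∞) (fun p => χ p ^ 2 * (V p / W p)) := (hχ.pow 2).mul hU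
  have hχ2c : HasCompactSupport (fun p => χ p ^ 2) := by
    refine hc.mono fun p hp => ?_
    contrapose! hp
    simp only [Function.mem_support, not_not] at hp ⊢
    simp [hp]
  have hθc : HasCompactSupport (fun p => χ p ^ 2 * (V p / W p)) := hχ2c.mul_right
  have hP : ∀ j, ContDiff ℝ (⊤ : ℕ∞)
      (fun q => (XD J j V q - F j q) * (χ q ^ 2 * (V q / W q))) := fun j => (hZ j).mul hθ
  have hPc : ∀ j, HasCompactSupport
      (fun q => (XD J j V q - F j q) * (χ q ^ 2 * (V q / W q))) := fun j => hθc.mul_left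
  have hPi : ∀ j, Integrable
      (XD J j (fun q => (XD J j V q - F j q) * (χ q ^ 2 * (V q / W q)))) := fun j =>
    (hX j (hP j)).continuous.integrable_of_hasCompactSupport (hasCompactSupport_XD J j (hPc j))
  have hzero : ∫ p, ∑ j, XD J j (fun q => (XD J j V q - F j q) * (χ q ^ 2 * (V q / W q))) p = 0 := by
    rw [integral_finsetSum _ fun j _ => hPi j]
    simp [integral_XD_eq_zero J _ (hP _) (hPc _)]
  have hXW : ∀ j, Continuous (XD J j W) := fun j => (hX j hW).continuous
  have hFc : ∀ j, Continuous (F j) := fun j => (hF j).continuous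
  have hI1 : Integrable (fun p => χ p ^ 2 * (V p ^ 2 / W p) - (3/2) * χ p ^ 2 *
        ∑ j, W p * (V p / W p * XD J j W p / W p - F j p / W p) ^ 2) := by
    have hWc := hW.continuous
    have hVc := hV.continuous
    have hχc := hχ.continuous
    refine Continuous.integrable_of_hasCompactSupport ?_ ?_
    · fun_prop (disch := assumption)
    · refine hχ2c.mono fun p hp => ?_
      contrapose! hp
      simp only [Function.mem_support, not_not] at hp ⊢
      simp [hp]
  have hI2 : Integrable (fun p => 3 * (∑ j, XD J j χ p ^ 2) * (V p ^ 2 / W p)) := by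
    have hWc := hW.continuous
    have hVc := hV.continuous
    have hχc : ∀ j, Continuous (XD J j χ) := fun j => (hX j hχ).continuous
    refine Continuous.integrable_of_hasCompactSupport ?_ ?_
    · fun_prop (disch := assumption)
    · refine HasCompactSupport.mul_right (HasCompactSupport.mul_left ?_)
      refine HasCompactSupport.intro hc fun p hp => ?_
      refine Finset.sum_eq_zero fun j _ => ?_
      have : XD J j χ p = 0 := by
        rw [XD_eq, show fderiv ℝ χ p = 0 from ?_]
        · rfl
        · by_contra h
          exact hp (support_fderiv_subset ℝ h)
      simp [this]
  have hmono : ∫ p, ((χ p ^ 2 * (V p ^ 2 / W p) - (3/2) * χ p ^ 2 *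
        ∑ j, W p * (V p / W p * XD J j W p / W p - F j p / W p) ^ 2) -
        3 * (∑ j, XD J j χ p ^ 2) * (V p ^ 2 / W p)) ≤
      ∫ p, ∑ j, XD J j (fun q => (XD J j V q - F j q) * (χ q ^ 2 * (V q / W q))) p := by
    refine integral_mono (hI1.sub hI2) (integrable_finsetSum _ fun j _ => hPi j) fun p => ?_
    have h1 : ∀ j, XD J j (fun q => (XD J j V q - F j q) * (χ q ^ 2 * (V q / W q))) p =
        (XD J j V p - F j p) * (χ p ^ 2 * XD J j (fun q => V q / W q) p +
          2 * χ p * XD J j χ p * (V p / W p)) +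
        XD J j (fun q => XD J j V q - F j q) p * (χ p ^ 2 * (V p / W p)) := fun j => by
      rw [XD_mul J j (hd (hZ j) p) (hd hθ p), XD_mul J j (hd (hχ.pow 2) p) (hd hU p),
        XD_sq j (hd hχ p)]
    have h2 : ∀ j, XD J j V p =
        V p / W p * XD J j W p + XD J j (fun q => V q / W q) p * W p := fun j => by
      rw [← XD_mul J j (hd hU p) (hd hW p)]
      congr 1
      ext q
      rw [div_mul_cancel₀ _ (hWne q)]
    change _ ≤ ∑ j, _
    simp only [h1]
    rw [Finset.sum_add_distrib, ← Finset.sum_mul, heq p]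
    have h3 : V p * (χ p ^ 2 * (V p / W p)) = χ p ^ 2 * (V p ^ 2 / W p) := by
      field_simp
    have h4 : ∀ j, 0 ≤ (XD J j V p - F j p) * (χ p ^ 2 * XD J j (fun q => V q / W q) p +
          2 * χ p * XD J j χ p * (V p / W p)) + (3/2) * χ p ^ 2 *
          (W p * (V p / W p * XD J j W p / W p - F j p / W p) ^ 2) +
          3 * XD J j χ p ^ 2 * (V p ^ 2 / W p) := fun j => by
      rw [h2 j]
      generalize XD J j (fun q => V q / W q) p = a
      obtain ⟨u, hu⟩ : ∃ u, u = V p / W p := ⟨_, rfl⟩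
      obtain ⟨e, he⟩ : ∃ e, e = V p / W p * XD J j W p / W p - F j p / W p := ⟨_, rfl⟩
      have hF' : F j p = u * XD J j W p - W p * e := by
        rw [he, hu]; have := hWne p; field_simp; ring
      have hV' : V p ^ 2 / W p = W p * u ^ 2 := by
        rw [hu]; have := hWne p; field_simp
      rw [← he, ← hu, hV', hF']
      -- the expression is a sum of squares
      have : 0 ≤ W p * ((1/2) * (χ p * a + 2 * u * XD J j χ p) ^ 2 +
          (1/2) * (χ p * a + χ p * e) ^ 2 + (u * XD J j χ p + χ p * e) ^ 2) :=
        mul_nonneg (hW0 p).le (by positivity)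
      refine this.trans (le_of_eq ?_)
      ring
    have h5 := Finset.sum_nonneg fun j (_ : j ∈ Finset.univ) => h4 j
    simp only [Finset.sum_add_distrib, ← Finset.mul_sum, ← Finset.sum_mul] at h5 ⊢
    linarith
  rw [hzero, integral_sub hI1 hI2] at hmono
  exact ⟨hI1, by linarith⟩

end Energy

/-! ### Averages of the weight and of weak solutions -/

section Averages

variable {n m : ℕ} {J : Fin m → Matrix (Fin (2*n)) (Fin (2*n)) ℝ}

theorem locallyIntegrable_of_le {f h : GrpPt n m → ℝ} (hf : Measurable f)
    (hh : LocallyIntegrable h)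
    (hle : ∀ K : Set (GrpPt n m), IsCompact K → ∃ B : ℝ,
      ∀ᵐ y ∂(volume : Measure (GrpPt n m)), y ∈ K → |f y| ≤ B * h y) :
    LocallyIntegrable f := by
  rw [locallyIntegrable_iff] at hh ⊢
  intro K hK
  obtain ⟨B, hB⟩ := hle K hK
  refine Integrable.mono' ((hh K hK).const_mul B) hf.aestronglyMeasurable ?_
  rw [ae_restrict_iff' hK.measurableSet]
  exact hB

/-- Cauchy–Schwarz for the averages of `v`, `w` and `v² / w`. -/
theorem sq_integral_le {φ w v f : GrpPt n m → ℝ} (hφ : ∀ y, 0 ≤ φ y)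
    (hf : ∀ y, 0 ≤ f y) (hw : ∀ y, 0 ≤ w y) (hv : ∀ y, v y ^ 2 = w y * f y)
    (iw : Integrable fun y => φ y * w y) (iv : Integrable fun y => φ y * |v y|)
    (jf : Integrable fun y => φ y * f y) (hpos : 0 < ∫ y, φ y * w y) :
    (∫ y, φ y * |v y|) ^ 2 ≤ (∫ y, φ y * w y) * ∫ y, φ y * f y := by
  set a := ∫ y, φ y * w y
  set b := ∫ y, φ y * |v y|
  set c := ∫ y, φ y * f y
  have h : ∀ t : ℝ, 2 * t * b ≤ t ^ 2 * a + c := fun t => by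
    rw [← integral_const_mul, ← integral_const_mul, ← integral_add (iw.const_mul _) jf]
    refine integral_mono (iv.const_mul _) ((iw.const_mul _).add jf) fun y => ?_
    have : 2 * t * |v y| ≤ t ^ 2 * w y + f y := by
      have h1 : (2 * t * |v y|) ^ 2 ≤ (t ^ 2 * w y + f y) ^ 2 := by
        rw [mul_pow, sq_abs, hv]
        nlinarith [sq_nonneg (t ^ 2 * w y - f y)]
      exact (abs_le_of_sq_le_sq' h1 (by have := hf y; have := hw y; positivity)).2
    have := mul_le_mul_of_nonneg_left this (hφ y)
    change 2 * t * (φ y * |v y|) ≤ t ^ 2 * (φ y * w y) + φ y * f y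
    linarith
  -- the optimal `t`
  have h2 := h (b / a)
  have h3 : 2 * (b / a) * b = 2 * (b ^ 2 / a) := by ring
  have h4 : (b / a) ^ 2 * a = b ^ 2 / a := by field_simp
  rw [h3, h4] at h2
  have h5 : b ^ 2 / a ≤ c := by linarith
  rw [div_le_iff₀ hpos] at h5
  linarith

theorem kint_moll_pos {w : GrpPt n m → ℝ} (hw : LocallyIntegrable w) (hw0 : ∀ y, 0 < w y)
    (k : ℕ) (x : GrpPt n m) : 0 < kint (fun x y => moll n m k (gdiv J x y)) w x := by
  have hk := isKer_gdiv J (moll_contDiff (n := n) (m := m) k) (moll_hasCompactSupport k)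
  rw [kint, integral_pos_iff_support_of_nonneg
    (fun y => mul_nonneg (moll_nonneg k _) (hw0 y).le) (hk.integrable hw x)]
  have hc : Continuous fun y => moll n m k (gdiv J x y) := (hk.contDiff_snd x).continuous
  have hs : (Function.support fun y => moll n m k (gdiv J x y) * w y) =
      Function.support fun y => moll n m k (gdiv J x y) := by
    ext y
    simp [(hw0 y).ne']
  rw [hs]
  refine hc.isOpen_support.measure_pos _ ?_
  by_contra hne
  rw [Set.not_nonempty_iff_eq_empty, Function.support_eq_empty_iff] at hne
  have h1 := integral_gdiv_right J (moll_contDiff (n := n) (m := m) k).continuous x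
  rw [moll_integral, hne] at h1
  simp at h1

theorem XD_neg (j : Fin (2*n)) (f : GrpPt n m → ℝ) (p : GrpPt n m) :
    XD J j (fun p => - f p) p = - XD J j f p := by
  rw [XD_eq, XD_eq, fderiv_fun_neg]
  rfl

/-- Mollification turns a weak horizontal derivative into a classical one. -/
theorem XD_kint_weak (hskew : ∀ k, (J k).transpose = -(J k)) {w g : GrpPt n m → ℝ}
    (j : Fin (2*n)) (hw : LocallyIntegrable w)
    (hweak : ∀ φ : GrpPt n m → ℝ, ContDiff ℝ (⊤ : ℕ∞) φ → HasCompactSupport φ →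
      ∫ y, w y * XD J j φ y = -∫ y, g y * φ y) {ρ : GrpPt n m → ℝ}
    (hρ : ContDiff ℝ (⊤ : ℕ∞) ρ) (hc : HasCompactSupport ρ) :
    XD J j (kint (fun x y => ρ (gdiv J x y)) w) = kint (fun x y => ρ (gdiv J x y)) g := by
  have hk := isKer_gdiv J hρ hc
  rw [hk.XD_kint J j hw]
  ext x
  have h := hweak _ (hk.contDiff_snd x) (hk.hasCompactSupport x)
  simp only [kint, FlowInv.kXD_eq J j hk (flowInv_gdiv j hskew ρ)]
  simp only [neg_mul, integral_neg]
  rw [← neg_eq_iff_eq_neg] at h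
  simp only [mul_comm (w _), mul_comm (g _)] at h
  exact h

/-- Mollification turns the weak equation into a classical one with a drift term. -/
theorem kint_weak_eq (hskew : ∀ k, (J k).transpose = -(J k)) {v : GrpPt n m → ℝ}
    {F : Fin (2*n) → GrpPt n m → ℝ} (hv : LocallyIntegrable v)
    (hF : ∀ j, LocallyIntegrable (F j))
    (hweak : ∀ φ : GrpPt n m → ℝ, ContDiff ℝ (⊤ : ℕ∞) φ → HasCompactSupport φ →
      ∫ y, (v y * (LSub J φ y + φ y) - ∑ j, F j y * XD J j φ y) = 0) {ρ : GrpPt n m → ℝ}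
    (hρ : ContDiff ℝ (⊤ : ℕ∞) ρ) (hc : HasCompactSupport ρ) (p : GrpPt n m) :
    ∑ j, XD J j (fun q => XD J j (kint (fun x y => ρ (gdiv J x y)) v) q -
      kint (fun x y => ρ (gdiv J x y)) (F j) q) p = kint (fun x y => ρ (gdiv J x y)) v p := by
  have hk := isKer_gdiv J hρ hc
  have hfl : ∀ j, FlowInv J j (fun x y => ρ (gdiv J x y)) := fun j => flowInv_gdiv j hskew ρ
  have hk1 : ∀ j, IsKer (kXD J j (fun x y => ρ (gdiv J x y))) := fun j => hk.kXD J j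
  have hk2 : ∀ j, IsKer (kXD J j (kXD J j (fun x y => ρ (gdiv J x y)))) := fun j =>
    (hk1 j).kXD J j
  set φ : GrpPt n m → ℝ := fun y => ρ (gdiv J p y) with hφ
  have e1 : ∀ j y, kXD J j (fun x y => ρ (gdiv J x y)) p y = - XD J j φ y := fun j y =>
    FlowInv.kXD_eq J j hk (hfl j) p y
  have e2 : ∀ j y, kXD J j (kXD J j (fun x y => ρ (gdiv J x y))) p y =
      XD J j (XD J j φ) y := fun j y => by
    rw [FlowInv.kXD_eq J j (hk1 j) (FlowInv.kXD j hskew hk (hfl j)) p y]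
    simp only [e1]
    rw [XD_neg, neg_neg]
  have i1 := fun j => (hk1 j).integrable (hF j) p
  have i2 := fun j => (hk2 j).integrable hv p
  have i0 := hk.integrable hv p
  have hd : ∀ {Ψ : GrpPt n m → GrpPt n m → ℝ} {f}, IsKer Ψ → LocallyIntegrable f →
      DifferentiableAt ℝ (kint Ψ f) p := fun h hf => (h.contDiff_kint hf).differentiable (by simp) p
  have hsum : ∀ j, XD J j (fun q => XD J j (kint (fun x y => ρ (gdiv J x y)) v) q -
      kint (fun x y => ρ (gdiv J x y)) (F j) q) p =
      ∫ y, (XD J j (XD J j φ) y * v y + XD J j φ y * F j y) := fun j => by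
    rw [hk.XD_kint J j hv, XD_sub J j (hd (hk1 j) hv) (hd hk (hF j)), (hk1 j).XD_kint J j hv,
      hk.XD_kint J j (hF j), kint, kint, ← integral_sub (i2 j) (i1 j)]
    simp only [e1, e2]
    exact integral_congr_ae (Eventually.of_forall fun y => by ring)
  have i3 : ∀ j, Integrable fun y => XD J j (XD J j φ) y * v y + XD J j φ y * F j y := fun j => by
    have := (i2 j).sub (i1 j)
    simp only [e1, e2] at this
    refine this.congr (Eventually.of_forall fun y => ?_)
    simp only [Pi.sub_apply]
    ring
  have hw := hweak φ (hk.contDiff_snd p) (hk.hasCompactSupport p)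
  simp only [hsum]
  rw [← integral_finsetSum _ fun j _ => i3 j, kint, ← sub_eq_zero,
    ← integral_sub (integrable_finsetSum _ fun j _ => i3 j) i0, ← neg_eq_zero, ← integral_neg,
    ← hw]
  refine integral_congr_ae (Eventually.of_forall fun y => ?_)
  simp only [LSub, Finset.sum_add_distrib, ← Finset.sum_mul]
  simp only [mul_comm (XD J _ φ y)]
  ring

end Averages

/-! ### Caccioppoli inequality for weak solutions -/

section Caccioppoli

variable {n m : ℕ} {J : Fin m → Matrix (Fin (2*n)) (Fin (2*n)) ℝ}

/-- The error term of `energy_ineq` is dominated by the averages of `v² / w`. -/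
theorem error_le {B W V G F b c : ℝ} (hW : 0 < W) (hV : |V| ≤ b) (hG : |G| ≤ B * W)
    (hF : |F| ≤ B * b) (hb : b ^ 2 ≤ W * c) :
    W * (V / W * G / W - F / W) ^ 2 ≤ 4 * B ^ 2 * c := by
  have hV2 : V ^ 2 ≤ W * c := (sq_le_sq' (by linarith [neg_abs_le V]) (by
    linarith [le_abs_self V])).trans hb
  have hG2 : G ^ 2 ≤ B ^ 2 * W ^ 2 := by
    rw [← mul_pow]; exact sq_le_sq' (by linarith [neg_abs_le G]) (by linarith [le_abs_self G])
  have hF2 : F ^ 2 ≤ B ^ 2 * (W * c) := by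
    refine le_trans ?_ (mul_le_mul_of_nonneg_left hb (sq_nonneg B))
    rw [← mul_pow]; exact sq_le_sq' (by linarith [neg_abs_le F]) (by linarith [le_abs_self F])
  have hc : 0 ≤ W * c := (sq_nonneg _).trans hb
  have h1 : V ^ 2 * G ^ 2 ≤ (W * c) * (B ^ 2 * W ^ 2) :=
    mul_le_mul hV2 hG2 (sq_nonneg _) hc
  have h2 : F ^ 2 * W ^ 2 ≤ B ^ 2 * (W * c) * W ^ 2 :=
    mul_le_mul_of_nonneg_right hF2 (sq_nonneg _)
  have e : W * (V / W * G / W - F / W) ^ 2 = (V * G - F * W) ^ 2 / W ^ 3 := by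
    field_simp
  rw [e, div_le_iff₀ (pow_pos hW 3)]
  nlinarith [sq_nonneg (V * G + F * W)]

/-- Caccioppoli inequality for weak solutions, with `v = u w`: the limit of `energy_ineq` along
the mollifications. The integrands of the latter become nonnegative after adding a multiple of
the mollification of `v² / w`, which makes Fatou's lemma applicable. -/
theorem caccioppoli (hskew : ∀ k, (J k).transpose = -(J k)) {w v : GrpPt n m → ℝ}
    {g : Fin (2*n) → GrpPt n m → ℝ} (hwm : Measurable w) (hw0 : ∀ y, 0 < w y)
    (hw : LocallyIntegrable w) (hgm : ∀ j, Measurable (g j))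
    (hgB : ∀ K : Set (GrpPt n m), IsCompact K → ∃ B : ℝ,
      ∀ᵐ y ∂(volume : Measure (GrpPt n m)), y ∈ K → ∀ j, |g j y| ≤ B * w y)
    (hgweak : ∀ j, ∀ φ : GrpPt n m → ℝ, ContDiff ℝ (⊤ : ℕ∞) φ → HasCompactSupport φ →
      ∫ y, w y * XD J j φ y = -∫ y, g j y * φ y)
    (hvm : Measurable v) (hf : Integrable fun y => v y ^ 2 / w y)
    (hweak : ∀ φ : GrpPt n m → ℝ, ContDiff ℝ (⊤ : ℕ∞) φ → HasCompactSupport φ →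
      ∫ y, (v y * (LSub J φ y + φ y) - ∑ j, v y / w y * g j y * XD J j φ y) = 0)
    {χ : GrpPt n m → ℝ} (hχ : ContDiff ℝ (⊤ : ℕ∞) χ) (hc : HasCompactSupport χ)
    (hχ1 : ∀ p, χ p ^ 2 ≤ 1) {M : ℝ} (hM : ∀ p, ∑ j, XD J j χ p ^ 2 ≤ M) :
    ∫ y, χ y ^ 2 * (v y ^ 2 / w y) ≤ 3 * M * ∫ y, v y ^ 2 / w y := by
  set f : GrpPt n m → ℝ := fun y => v y ^ 2 / w y with hfdef
  set F : Fin (2*n) → GrpPt n m → ℝ := fun j y => v y / w y * g j y with hFdef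
  have hfm : Measurable f := (hvm.pow_const 2).div hwm
  have hf0 : ∀ y, 0 ≤ f y := fun y => div_nonneg (sq_nonneg _) (hw0 y).le
  have hfw : ∀ y, v y ^ 2 = w y * f y := fun y => by
    have := (hw0 y).ne'
    simp only [hfdef]; field_simp
  have lf : LocallyIntegrable f := hf.locallyIntegrable
  have lv' : LocallyIntegrable (fun y => |v y|) := by
    refine locallyIntegrable_of_le (continuous_abs.measurable.comp hvm) (hw.add lf) fun K _ =>
      ⟨1/2, Eventually.of_forall fun y _ => ?_⟩
    rw [abs_abs]
    have h1 : (2 * |v y|) ^ 2 ≤ (w y + f y) ^ 2 := by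
      rw [mul_pow, sq_abs, hfw]
      nlinarith [sq_nonneg (w y - f y)]
    have := (abs_le_of_sq_le_sq' h1 (add_nonneg (hw0 y).le (hf0 y))).2
    simp only [Pi.add_apply]
    linarith
  have lv : LocallyIntegrable v :=
    locallyIntegrable_of_le hvm lv' fun K _ => ⟨1, Eventually.of_forall fun y _ => by simp⟩
  have lg : ∀ j, LocallyIntegrable (g j) := fun j =>
    locallyIntegrable_of_le (hgm j) hw fun K hK => by
      obtain ⟨B, hB⟩ := hgB K hK
      exact ⟨B, hB.mono fun y hy hyK => hy hyK j⟩
  have hFle : ∀ {B : ℝ} {y} {j}, |g j y| ≤ B * w y → |F j y| ≤ B * |v y| := by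
    intro B y j h
    simp only [hFdef]
    rw [abs_mul, abs_div, abs_of_pos (hw0 y)]
    have hw' := (hw0 y).ne'
    calc |v y| / w y * |g j y| ≤ |v y| / w y * (B * w y) :=
          mul_le_mul_of_nonneg_left h (div_nonneg (abs_nonneg _) (hw0 y).le)
      _ = B * |v y| := by field_simp
  have lF : ∀ j, LocallyIntegrable (F j) := fun j =>
    locallyIntegrable_of_le ((hvm.div hwm).mul (hgm j)) lv' fun K hK => by
      obtain ⟨B, hB⟩ := hgB K hK
      exact ⟨B, hB.mono fun y hy hyK => hFle (hy hyK j)⟩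
  -- the kernels see only this compact set when `x` ranges over the support of the cutoff
  set K' : Set (GrpPt n m) := (fun q : GrpPt n m × GrpPt n m => gsol J q.1 q.2) ''
    (Metric.closedBall 0 1 ×ˢ tsupport χ) with hK'
  have hK'c : IsCompact K' :=
    ((isCompact_closedBall _ _).prod hc.isCompact).image (contDiff_gsol J).continuous
  obtain ⟨B, hB⟩ := hgB K' hK'c
  set Φ : ℕ → GrpPt n m → GrpPt n m → ℝ := fun k x y => moll n m k (gdiv J x y) with hΦ
  have hk : ∀ k, IsKer (Φ k) := fun k =>
    isKer_gdiv J (moll_contDiff k) (moll_hasCompactSupport k)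
  have hΦ0 : ∀ k x y, 0 ≤ Φ k x y := fun k x y => moll_nonneg k _
  have hΦz : ∀ k, ∀ x ∈ tsupport χ, ∀ y, y ∉ K' → Φ k x y = 0 := fun k x hx y hy =>
    gdiv_eq_zero_of_not_mem J (moll_eq_zero k) hx hy
  have hWpos : ∀ k x, 0 < kint (Φ k) w x := fun k x => kint_moll_pos hw hw0 k x
  have habs : ∀ k x (a b : GrpPt n m → ℝ) (C : ℝ), LocallyIntegrable b →
      (∀ᵐ y, Φ k x y ≠ 0 → |a y| ≤ C * b y) →
      |kint (Φ k) a x| ≤ C * kint (Φ k) b x := by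
    intro k x a b C hb h
    rw [kint, kint, ← integral_const_mul, ← Real.norm_eq_abs]
    refine norm_integral_le_of_norm_le (((hk k).integrable hb x).const_mul C) ?_
    filter_upwards [h] with y hy
    rw [Real.norm_eq_abs, abs_mul, abs_of_nonneg (hΦ0 k x y)]
    by_cases h0 : Φ k x y = 0
    · simp [h0]
    · have := mul_le_mul_of_nonneg_left (hy h0) (hΦ0 k x y)
      linarith
  have hVb : ∀ k x, |kint (Φ k) v x| ≤ kint (Φ k) (fun y => |v y|) x := fun k x => by
    have := habs k x v (fun y => |v y|) 1 lv' (Eventually.of_forall fun y _ => by simp)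
    simpa using this
  have hbc : ∀ k x, kint (Φ k) (fun y => |v y|) x ^ 2 ≤ kint (Φ k) w x * kint (Φ k) f x :=
    fun k x => sq_integral_le (hΦ0 k x) hf0 (fun y => (hw0 y).le) hfw
      ((hk k).integrable hw x) ((hk k).integrable lv' x) ((hk k).integrable lf x) (hWpos k x)
  have hVf : ∀ k x, kint (Φ k) v x ^ 2 / kint (Φ k) w x ≤ kint (Φ k) f x := fun k x => by
    rw [div_le_iff₀ (hWpos k x), mul_comm]
    refine le_trans ?_ (hbc k x)
    rw [← sq_abs]
    exact pow_le_pow_left₀ (abs_nonneg _) (hVb k x) 2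
  have hfk0 : ∀ k x, 0 ≤ kint (Φ k) f x := fun k x =>
    integral_nonneg fun y => mul_nonneg (hΦ0 k x y) (hf0 y)
  have hlf : ∀ k, ∫⁻ x, ENNReal.ofReal (kint (Φ k) f x) = ∫⁻ y, ENNReal.ofReal (f y) := fun k =>
    lintegral_kint_gdiv J (moll_contDiff k) (moll_hasCompactSupport k) (moll_nonneg k)
      (moll_integral k) lf hfm hf0
  have hfkc : ∀ k, Continuous (kint (Φ k) f) := fun k => ((hk k).contDiff_kint lf).continuous
  have hfki : ∀ k, Integrable (kint (Φ k) f) := fun k => by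
    refine ⟨(hfkc k).aestronglyMeasurable, ?_⟩
    rw [hasFiniteIntegral_iff_ofReal (Eventually.of_forall (hfk0 k)), hlf k,
      ← hasFiniteIntegral_iff_ofReal (Eventually.of_forall hf0)]
    exact hf.2
  have hfkI : ∀ k, ∫ x, kint (Φ k) f x = ∫ y, f y := fun k => by
    rw [integral_eq_lintegral_of_nonneg_ae (Eventually.of_forall (hfk0 k))
      (hfkc k).aestronglyMeasurable, hlf k, ← integral_eq_lintegral_of_nonneg_ae
      (Eventually.of_forall hf0) hfm.aestronglyMeasurable]
  -- the mollified functions satisfy the hypotheses of `energy_ineq`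
  have hXW : ∀ k j, XD J j (kint (Φ k) w) = kint (Φ k) (g j) := fun k j =>
    XD_kint_weak hskew j hw (hgweak j) (moll_contDiff k) (moll_hasCompactSupport k)
  have hen := fun k => energy_ineq ((hk k).contDiff_kint hw) ((hk k).contDiff_kint lv) (hWpos k)
    (fun j => (hk k).contDiff_kint (lF j)) hχ hc
    (kint_weak_eq hskew lv lF hweak (moll_contDiff k) (moll_hasCompactSupport k))
  simp only [hXW] at hen
  set S : ℕ → GrpPt n m → ℝ := fun k p => χ p ^ 2 * (kint (Φ k) v p ^ 2 / kint (Φ k) w p) -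
    (3/2) * χ p ^ 2 * ∑ j, kint (Φ k) w p * (kint (Φ k) v p / kint (Φ k) w p *
      kint (Φ k) (g j) p / kint (Φ k) w p - kint (Φ k) (F j) p / kint (Φ k) w p) ^ 2 with hS
  have hSi : ∀ k, Integrable (S k) := fun k => (hen k).1
  have hSle : ∀ k, ∫ p, S k p ≤ 3 * M * ∫ y, f y := fun k => by
    refine (hen k).2.trans ?_
    rw [← hfkI k, ← integral_const_mul]
    refine integral_mono_of_nonneg (Eventually.of_forall fun p => ?_) ((hfki k).const_mul _)
      (Eventually.of_forall fun p => ?_)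
    · exact mul_nonneg (mul_nonneg (by norm_num) (Finset.sum_nonneg fun j _ => sq_nonneg _))
        (div_nonneg (sq_nonneg _) (hWpos k p).le)
    · have h0 : 0 ≤ ∑ j, XD J j χ p ^ 2 := Finset.sum_nonneg fun j _ => sq_nonneg _
      refine mul_le_mul (mul_le_mul_of_nonneg_left (hM p) (by norm_num)) (hVf k p)
        (div_nonneg (sq_nonneg _) (hWpos k p).le) ?_
      linarith [hM p]
  -- `12 n B² = (3/2) · 2n · 4 B²`, the bound of `error_le` summed over the `2n` fields
  set C : ℝ := 12 * n * B ^ 2 with hC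
  have hC0 : 0 ≤ C := by positivity
  have hS0 : ∀ k p, 0 ≤ S k p + C * kint (Φ k) f p := fun k p => by
    by_cases hp : p ∈ tsupport χ
    · have h1 : ∀ j, kint (Φ k) w p * (kint (Φ k) v p / kint (Φ k) w p *
          kint (Φ k) (g j) p / kint (Φ k) w p - kint (Φ k) (F j) p / kint (Φ k) w p) ^ 2 ≤
          4 * B ^ 2 * kint (Φ k) f p := fun j => by
        refine error_le (hWpos k p) (hVb k p) ?_ ?_ (hbc k p)
        · refine habs k p _ _ B hw (hB.mono fun y hy h => hy ?_ j)
          by_contra hyK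
          exact h (hΦz k p hp y hyK)
        · refine habs k p _ _ B lv' (hB.mono fun y hy h => hFle (hy ?_ j))
          by_contra hyK
          exact h (hΦz k p hp y hyK)
      have h2 := Finset.sum_le_sum fun j (_ : j ∈ Finset.univ) => h1 j
      rw [Finset.sum_const, Finset.card_univ, Fintype.card_fin, nsmul_eq_mul] at h2
      push_cast at h2
      have h3 : 0 ≤ χ p ^ 2 * (kint (Φ k) v p ^ 2 / kint (Φ k) w p) :=
        mul_nonneg (sq_nonneg _) (div_nonneg (sq_nonneg _) (hWpos k p).le)
      have h4 := mul_le_mul_of_nonneg_left h2 (sq_nonneg (χ p))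
      have h5 : χ p ^ 2 * (2 * n * (4 * B ^ 2 * kint (Φ k) f p)) ≤
          1 * (2 * n * (4 * B ^ 2 * kint (Φ k) f p)) :=
        mul_le_mul_of_nonneg_right (hχ1 p) (by have := hfk0 k p; positivity)
      simp only [hS, hC]
      linarith
    · have : χ p = 0 := image_eq_zero_of_notMem_tsupport hp
      simp only [hS, this]
      have := mul_nonneg hC0 (hfk0 k p)
      simpa using this
  have hlim : ∀ᵐ p, Tendsto (fun k => S k p + C * kint (Φ k) f p) atTop
      (nhds (χ p ^ 2 * f p + C * f p)) := by
    filter_upwards [ae_tendsto_kint hskew hw, ae_tendsto_kint hskew lv, ae_tendsto_kint hskew lf,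
      ae_all_iff.2 fun j => ae_tendsto_kint hskew (lg j),
      ae_all_iff.2 fun j => ae_tendsto_kint hskew (lF j)] with p tw tv tf tg tF
    have hwp := (hw0 p).ne'
    have tE : ∀ j, Tendsto (fun k => kint (Φ k) w p * (kint (Φ k) v p / kint (Φ k) w p *
        kint (Φ k) (g j) p / kint (Φ k) w p - kint (Φ k) (F j) p / kint (Φ k) w p) ^ 2) atTop
        (nhds 0) := fun j => by
      have := tw.mul (((((tv.div tw hwp).mul (tg j)).div tw hwp).sub
        ((tF j).div tw hwp)).pow 2)
      refine this.trans (le_of_eq ?_)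
      simp [hFdef]
    have := (((tv.pow 2).div tw hwp).const_mul (χ p ^ 2)).sub
      ((tendsto_finsetSum Finset.univ fun j _ => tE j).const_mul ((3/2) * χ p ^ 2))
    have := this.add (tf.const_mul C)
    simpa using this
  have hIk : ∀ k, ∫⁻ p, ENNReal.ofReal (S k p + C * kint (Φ k) f p) ≤
      ENNReal.ofReal (3 * M * (∫ y, f y) + C * ∫ y, f y) := fun k => by
    have hi : Integrable fun p => S k p + C * kint (Φ k) f p :=
      (hSi k).add ((hfki k).const_mul C)
    rw [← ofReal_integral_eq_lintegral_ofReal hi (Eventually.of_forall (hS0 k))]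
    refine ENNReal.ofReal_le_ofReal ?_
    rw [integral_add (hSi k) ((hfki k).const_mul C), integral_const_mul, hfkI k]
    linarith [hSle k]
  have hχf : Integrable fun y => χ y ^ 2 * f y := by
    refine hf.mono' ((hχ.continuous.measurable.pow_const 2).mul hfm).aestronglyMeasurable
      (Eventually.of_forall fun y => ?_)
    rw [Real.norm_eq_abs, abs_of_nonneg (mul_nonneg (sq_nonneg _) (hf0 y))]
    exact mul_le_of_le_one_left (hf0 y) (hχ1 y)
  have hfin : ∫⁻ p, ENNReal.ofReal (χ p ^ 2 * f p + C * f p) ≤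
      ENNReal.ofReal (3 * M * (∫ y, f y) + C * ∫ y, f y) := by
    calc ∫⁻ p, ENNReal.ofReal (χ p ^ 2 * f p + C * f p)
        = ∫⁻ p, liminf (fun k => ENNReal.ofReal (S k p + C * kint (Φ k) f p)) atTop := by
          refine lintegral_congr_ae ?_
          filter_upwards [hlim] with p hp
          exact ((ENNReal.continuous_ofReal.tendsto _).comp hp).liminf_eq.symm
      _ ≤ liminf (fun k => ∫⁻ p, ENNReal.ofReal (S k p + C * kint (Φ k) f p)) atTop :=
          lintegral_liminf_le' fun k =>
            ((hSi k).add ((hfki k).const_mul C)).aemeasurable.ennreal_ofReal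
      _ ≤ _ := by
          refine (liminf_le_liminf (Eventually.of_forall hIk)).trans ?_
          simp
  have hM0 : 0 ≤ M := (Finset.sum_nonneg fun j _ => sq_nonneg _).trans (hM 0)
  have hR0 : 0 ≤ ∫ y, f y := integral_nonneg hf0
  have hi : Integrable fun p => χ p ^ 2 * f p + C * f p := hχf.add (hf.const_mul C)
  rw [← ofReal_integral_eq_lintegral_ofReal hi
    (Eventually.of_forall fun p => add_nonneg (mul_nonneg (sq_nonneg _) (hf0 p))
      (mul_nonneg hC0 (hf0 p))), ENNReal.ofReal_le_ofReal_iff (by positivity),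
    integral_add hχf (hf.const_mul C), integral_const_mul] at hfin
  linarith

end Caccioppoli

/-! ### Vanishing of square-integrable weak solutions -/

section Liouville

variable {n m : ℕ}

/-- The group dilations `(x, t) ↦ (c x, c² t)`. -/
def dil (n m : ℕ) (c : ℝ) : GrpPt n m →L[ℝ] GrpPt n m :=
  (c • ContinuousLinearMap.fst ℝ _ _).prod (c ^ 2 • ContinuousLinearMap.snd ℝ _ _)

theorem dil_apply (c : ℝ) (p : GrpPt n m) : dil n m c p = (c • p.1, c ^ 2 • p.2) := rfl

/-- The horizontal fields are homogeneous of degree one under dilations. -/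
theorem XD_dil (J : Fin m → Matrix (Fin (2*n)) (Fin (2*n)) ℝ) (j : Fin (2*n)) (c : ℝ)
    {χ : GrpPt n m → ℝ} (hχ : Differentiable ℝ χ) (p : GrpPt n m) :
    XD J j (fun q => χ (dil n m c q)) p = c * XD J j χ (dil n m c p) := by
  have h : HasFDerivAt (fun q => χ (dil n m c q))
      ((fderiv ℝ χ (dil n m c p)).comp (dil n m c)) p :=
    (hχ _).hasFDerivAt.comp p (dil n m c).hasFDerivAt
  have hv : dil n m c (hvec J j p) = c • hvec J j (dil n m c p) := by
    rw [dil_apply, dil_apply]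
    ext k
    · simp [hvec]
    · simp [hvec, Matrix.mulVec_smul]; ring
  rw [XD_eq, XD_eq, h.fderiv, ContinuousLinearMap.comp_apply, hv, map_smul, smul_eq_mul]

/-- The smooth cutoffs used to exhaust the group: dilates of a fixed bump. -/
theorem exists_cutoffs (J : Fin m → Matrix (Fin (2*n)) (Fin (2*n)) ℝ) :
    ∃ (χ : ℕ → GrpPt n m → ℝ) (M : ℕ → ℝ),
      (∀ k, ContDiff ℝ (⊤ : ℕ∞) (χ k)) ∧ (∀ k, HasCompactSupport (χ k)) ∧
      (∀ k p, χ k p ^ 2 ≤ 1) ∧ (∀ p, Tendsto (fun k => χ k p) atTop (nhds 1)) ∧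
      (∀ k p, ∑ j, XD J j (χ k) p ^ 2 ≤ M k) ∧ Tendsto M atTop (nhds 0) := by
  let χ : ContDiffBump (0 : GrpPt n m) := ⟨1, 2, one_pos, one_lt_two⟩
  have hχ : ContDiff ℝ (⊤ : ℕ∞) χ := χ.contDiff
  have hX : ∀ j, Continuous (XD J j χ) := fun j => (contDiff_XD J j hχ).continuous
  obtain ⟨M0, hM0⟩ : ∃ M0, ∀ p, ‖∑ j, XD J j χ p ^ 2‖ ≤ M0 := by
    have hc : Continuous fun p => ∑ j, XD J j χ p ^ 2 := by fun_prop
    refine hc.bounded_above_of_compact_support (HasCompactSupport.intro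
      (K := ⋃ j, tsupport (XD J j χ)) (isCompact_iUnion fun j =>
        hasCompactSupport_XD J j χ.hasCompactSupport) fun p hp => ?_)
    simp only [Set.mem_iUnion, not_exists] at hp
    exact Finset.sum_eq_zero fun j _ => by rw [image_eq_zero_of_notMem_tsupport (hp j)]; simp
  let c : ℕ → ℝ := fun k => 1 / ((k : ℝ) + 1)
  have hc0 : ∀ k, c k ≠ 0 := fun k => by simp only [c]; positivity
  have hc : Tendsto c atTop (nhds 0) := tendsto_one_div_add_atTop_nhds_zero_nat
  refine ⟨fun k p => χ (dil n m (c k) p), fun k => c k ^ 2 * M0, fun k =>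
    hχ.comp (dil n m (c k)).contDiff, fun k => ?_, fun k p => ?_, fun p => ?_, fun k p => ?_, ?_⟩
  · refine HasCompactSupport.intro (χ.hasCompactSupport.isCompact.image
      (dil n m (c k)⁻¹).continuous) fun p hp => image_eq_zero_of_notMem_tsupport fun h => hp
        ⟨_, h, ?_⟩
    simp [dil_apply, smul_smul, hc0 k]
  · exact pow_le_one₀ χ.nonneg χ.le_one
  · have hd : Tendsto (fun k => dil n m (c k) p) atTop (nhds 0) := by
      have : Tendsto (fun k => (c k • p.1, c k ^ 2 • p.2)) atTop
          (nhds ((0:ℝ) • p.1, (0:ℝ) ^ 2 • p.2)) :=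
        (hc.smul_const _).prodMk_nhds ((hc.pow 2).smul_const _)
      refine this.trans (le_of_eq ?_)
      simp
    refine tendsto_const_nhds.congr' ?_
    filter_upwards [hd.eventually (Metric.closedBall_mem_nhds 0 one_pos)] with k hk
    exact (χ.one_of_mem_closedBall hk).symm
  · simp only [XD_dil J _ _ (hχ.differentiable (by simp)), mul_pow, ← Finset.mul_sum]
    exact mul_le_mul_of_nonneg_left ((le_abs_self _).trans (hM0 _)) (sq_nonneg _)
  · simpa using (hc.pow 2).mul_const M0

/-- Square-integrable weak solutions of `(L_w + 1) u = 0` vanish; here `v = u w`. -/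
theorem eq_zero_of_weak {J : Fin m → Matrix (Fin (2*n)) (Fin (2*n)) ℝ}
    (hskew : ∀ k, (J k).transpose = -(J k)) {w v : GrpPt n m → ℝ}
    {g : Fin (2*n) → GrpPt n m → ℝ} (hwm : Measurable w) (hw0 : ∀ y, 0 < w y)
    (hw : LocallyIntegrable w) (hgm : ∀ j, Measurable (g j))
    (hgB : ∀ K : Set (GrpPt n m), IsCompact K → ∃ B : ℝ,
      ∀ᵐ y ∂(volume : Measure (GrpPt n m)), y ∈ K → ∀ j, |g j y| ≤ B * w y)
    (hgweak : ∀ j, ∀ φ : GrpPt n m → ℝ, ContDiff ℝ (⊤ : ℕ∞) φ → HasCompactSupport φ →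
      ∫ y, w y * XD J j φ y = -∫ y, g j y * φ y)
    (hvm : Measurable v) (hf : Integrable fun y => v y ^ 2 / w y)
    (hweak : ∀ φ : GrpPt n m → ℝ, ContDiff ℝ (⊤ : ℕ∞) φ → HasCompactSupport φ →
      ∫ y, (v y * (LSub J φ y + φ y) - ∑ j, v y / w y * g j y * XD J j φ y) = 0) :
    ∀ᵐ y, v y = 0 := by
  obtain ⟨χ, M, hχ, hχc, hχ1, hχlim, hM, hMlim⟩ := exists_cutoffs (n := n) J
  have hf0 : ∀ y, 0 ≤ v y ^ 2 / w y := fun y => div_nonneg (sq_nonneg _) (hw0 y).le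
  have h1 := fun k => caccioppoli hskew hwm hw0 hw hgm hgB hgweak hvm hf hweak (hχ k) (hχc k)
    (hχ1 k) (hM k)
  have h2 : Tendsto (fun k => ∫ y, χ k y ^ 2 * (v y ^ 2 / w y)) atTop
      (nhds (∫ y, v y ^ 2 / w y)) := by
    refine tendsto_integral_of_dominated_convergence _ (fun k => ?_) hf (fun k =>
      Eventually.of_forall fun y => ?_) (Eventually.of_forall fun y => ?_)
    · exact (((hχ k).continuous.measurable.pow_const 2).mul
        ((hvm.pow_const 2).div hwm)).aestronglyMeasurable
    · rw [Real.norm_eq_abs, abs_of_nonneg (mul_nonneg (sq_nonneg _) (hf0 y))]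
      exact mul_le_of_le_one_left (hf0 y) (hχ1 k y)
    · simpa using ((hχlim y).pow 2).mul_const (v y ^ 2 / w y)
  have h3 : Tendsto (fun k => 3 * M k * ∫ y, v y ^ 2 / w y) atTop (nhds 0) := by
    simpa using (hMlim.const_mul 3).mul_const (∫ y, v y ^ 2 / w y)
  have h4 : ∫ y, v y ^ 2 / w y = 0 :=
    le_antisymm (le_of_tendsto_of_tendsto' h2 h3 h1) (integral_nonneg hf0)
  rw [integral_eq_zero_iff_of_nonneg hf0 hf] at h4
  filter_upwards [h4] with y hy
  have h5 : v y ^ 2 / w y = 0 := hy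
  rw [div_eq_zero_iff] at h5
  rcases h5 with h | h
  · exact pow_eq_zero_iff (two_ne_zero) |>.1 h
  · exact absurd h (hw0 y).ne'

end Liouville

/-! ### The weighted space and the Dirichlet form -/

section Weighted

variable {n m : ℕ} {J : Fin m → Matrix (Fin (2*n)) (Fin (2*n)) ℝ}
variable {w : GrpPt n m → ℝ}
variable {E : Type*} [NormedAddCommGroup E] [NormedSpace ℝ E]

theorem integral_wMeasure (hwm : Measurable w) (hw0 : ∀ y, 0 < w y) (F : GrpPt n m → E) :
    ∫ y, F y ∂(wMeasure w) = ∫ y, w y • F y := by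
  rw [wMeasure, integral_withDensity_eq_integral_toReal_smul hwm.ennreal_ofReal
    (Eventually.of_forall fun y => ENNReal.ofReal_lt_top)]
  refine integral_congr_ae (Eventually.of_forall fun y => ?_)
  simp [ENNReal.toReal_ofReal (hw0 y).le]

theorem integrable_wMeasure (hwm : Measurable w) (hw0 : ∀ y, 0 < w y) (F : GrpPt n m → E) :
    Integrable F (wMeasure w) ↔ Integrable fun y => w y • F y := by
  rw [wMeasure, integrable_withDensity_iff_integrable_smul' hwm.ennreal_ofReal
    (Eventually.of_forall fun y => ENNReal.ofReal_lt_top)]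
  refine integrable_congr (Eventually.of_forall fun y => ?_)
  simp [ENNReal.toReal_ofReal (hw0 y).le]

theorem ae_wMeasure (hwm : Measurable w) (hw0 : ∀ y, 0 < w y) {p : GrpPt n m → Prop} :
    (∀ᵐ y ∂(wMeasure w), p y) ↔ ∀ᵐ y, p y := by
  rw [wMeasure, ae_withDensity_iff hwm.ennreal_ofReal]
  refine eventually_congr (Eventually.of_forall fun y => ?_)
  simp [hw0 y]

theorem locallyIntegrable_weight (hwm : Measurable w) (hw0 : ∀ y, 0 < w y)
    (hwloc : ∀ K : Set (GrpPt n m), IsCompact K →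
      ∃ C : ℝ, ∀ᵐ y ∂(volume : Measure (GrpPt n m)), y ∈ K → w y ≤ C) :
    LocallyIntegrable w := by
  refine locallyIntegrable_of_le (h := fun _ => (1:ℝ)) hwm (locallyIntegrable_const 1) ?_
  intro K hK
  obtain ⟨C, hC⟩ := hwloc K hK
  refine ⟨C, hC.mono fun y hy hyK => ?_⟩
  rw [abs_of_pos (hw0 y), mul_one]
  exact hy hyK

theorem isFiniteMeasureOnCompacts_wMeasure
    (hw : LocallyIntegrable w) : IsFiniteMeasureOnCompacts (wMeasure w) := by
  refine ⟨fun K hK => ?_⟩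
  rw [wMeasure, withDensity_apply _ hK.measurableSet]
  exact (hw.integrableOn_isCompact hK).lintegral_lt_top

theorem continuous_kN : Continuous (kN : GrpPt n m → ℝ) := by
  unfold kN e2norm
  refine Continuous.rpow_const (by fun_prop) fun _ => Or.inr (by norm_num)

theorem kN_nonneg (p : GrpPt n m) : 0 ≤ kN p := by
  unfold kN
  positivity

/-- The growth bound makes `|∇_H w| / w` bounded on compact sets. -/
theorem gradient_bound (hw0 : ∀ y, 0 < w y) {g : Fin (2*n) → GrpPt n m → ℝ}
    (hbound : ∃ C : ℝ, ∀ᵐ y ∂(volume : Measure (GrpPt n m)),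
      Real.sqrt (∑ j, (g j y)^2) ≤ C * (1 + kN y) * w y)
    (K : Set (GrpPt n m)) (hK : IsCompact K) :
    ∃ B : ℝ, ∀ᵐ y ∂volume, y ∈ K → ∀ j, |g j y| ≤ B * w y := by
  obtain ⟨C, hC⟩ := hbound
  obtain ⟨M, hM⟩ := hK.bddAbove_image (f := fun y => C * (1 + kN y))
    (continuous_const.mul (continuous_const.add continuous_kN)).continuousOn
  refine ⟨M, hC.mono fun y hy hyK j => ?_⟩
  have h1 : |g j y| ≤ Real.sqrt (∑ j, (g j y)^2) := by
    refine Real.abs_le_sqrt ?_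
    exact Finset.single_le_sum (f := fun j => (g j y)^2) (fun i _ => sq_nonneg _)
      (Finset.mem_univ j)
  have h2 : C * (1 + kN y) ≤ M := hM ⟨y, hyK, rfl⟩
  exact h1.trans (hy.trans (mul_le_mul_of_nonneg_right h2 (hw0 y).le))

theorem integrable_smul_test {f : GrpPt n m → ℝ} (hf : LocallyIntegrable f)
    {θ : GrpPt n m → E} (hθ : Continuous θ) (hθc : HasCompactSupport θ) :
    Integrable fun y => f y • θ y :=
  hf.integrable_smul_right_of_hasCompactSupport hθ hθc

/-- The weak gradient tested against complex functions. -/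
theorem weak_complex (j : Fin (2*n)) {g : GrpPt n m → ℝ} (hw : LocallyIntegrable w)
    (hg : LocallyIntegrable g)
    (hgweak : ∀ φ : GrpPt n m → ℝ, ContDiff ℝ (⊤ : ℕ∞) φ → HasCompactSupport φ →
      ∫ y, w y * XD J j φ y = -∫ y, g y * φ y)
    {θ : GrpPt n m → ℂ} (hθ : ContDiff ℝ (⊤ : ℕ∞) θ) (hθc : HasCompactSupport θ) :
    ∫ y, w y • XD J j θ y = -∫ y, g y • θ y := by
  have hX : Integrable fun y => w y • XD J j θ y :=
    integrable_smul_test hw (contDiff_XD J j hθ).continuous (hasCompactSupport_XD J j hθc)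
  have hG : Integrable fun y => g y • θ y := integrable_smul_test hg hθ.continuous hθc
  have key : ∀ L : ℂ →L[ℝ] ℝ, L (∫ y, w y • XD J j θ y) = L (-∫ y, g y • θ y) := by
    intro L
    rw [map_neg, ← L.integral_comp_comm hX, ← L.integral_comp_comm hG]
    have := hgweak (fun y => L (θ y)) (L.contDiff.comp hθ)
      (hθc.comp_left (g := L) (map_zero L))
    rw [XD_clm_comp J j L (hθ.differentiable (by simp))] at this
    simpa only [map_smul, smul_eq_mul] using this
  apply Complex.ext
  · exact key Complex.reCLM
  · exact key Complex.imCLM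

/-- The weighted sub-Laplacian `φ ↦ L φ - (∇_H w / w) · ∇_H φ` on functions; `g` stands for
`∇_H w`. -/
def wLap (J : Fin m → Matrix (Fin (2*n)) (Fin (2*n)) ℝ) (w : GrpPt n m → ℝ)
    (g : Fin (2*n) → GrpPt n m → ℝ) (φ : GrpPt n m → E) (y : GrpPt n m) : E :=
  LSub J φ y - ∑ j, (g j y / w y) • XD J j φ y

/-- Green's formula: the operator is the one of the Dirichlet form `∫ ⟨∇_H φ, ∇_H ψ⟩ w`. -/
theorem green {g : Fin (2*n) → GrpPt n m → ℝ} (hw0 : ∀ y, 0 < w y) (hw : LocallyIntegrable w)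
    (hg : ∀ j, LocallyIntegrable (g j))
    (hgweak : ∀ j, ∀ φ : GrpPt n m → ℝ, ContDiff ℝ (⊤ : ℕ∞) φ → HasCompactSupport φ →
      ∫ y, w y * XD J j φ y = -∫ y, g j y * φ y)
    {φ ψ : GrpPt n m → ℂ} (hφ : ContDiff ℝ (⊤ : ℕ∞) φ) (hφc : HasCompactSupport φ)
    (hψ : ContDiff ℝ (⊤ : ℕ∞) ψ) :
    ∫ y, w y • (star (wLap J w g φ y) * ψ y)
      = ∑ j, ∫ y, w y • (star (XD J j φ y) * XD J j ψ y) := by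
  set c : ℂ →L[ℝ] ℂ := Complex.conjCLE.toContinuousLinearMap with hc
  have hcs : ∀ z : ℂ, c z = star z := fun z => rfl
  have hX := fun j => contDiff_XD J j hφ
  have hXX := fun j => contDiff_XD J j (hX j)
  have hXc := fun j => hasCompactSupport_XD J j hφc
  have hXXc := fun j => hasCompactSupport_XD J j (hXc j)
  have cX := fun j => c.contDiff.comp (hX j)
  have cXX := fun j => c.contDiff.comp (hXX j)
  have cXc : ∀ j, HasCompactSupport (fun y => c (XD J j φ y)) := fun j =>
    (hXc j).comp_left (g := c) (map_zero c)
  have cXXc : ∀ j, HasCompactSupport (fun y => c (XD J j (XD J j φ) y)) := fun j =>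
    (hXXc j).comp_left (g := c) (map_zero c)
  have i1 : ∀ j, Integrable fun y => w y • (c (XD J j φ y) * XD J j ψ y) := fun j =>
    integrable_smul_test hw ((cX j).continuous.mul (contDiff_XD J j hψ).continuous)
      ((cXc j).mul_right)
  have i2 : ∀ j, Integrable fun y => w y • (c (XD J j (XD J j φ) y) * ψ y) := fun j =>
    integrable_smul_test hw ((cXX j).continuous.mul hψ.continuous) ((cXXc j).mul_right)
  have i3 : ∀ j, Integrable fun y => g j y • (c (XD J j φ y) * ψ y) := fun j =>
    integrable_smul_test (hg j) ((cX j).continuous.mul hψ.continuous) ((cXc j).mul_right)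
  have step : ∀ j, ∫ y, w y • (c (XD J j φ y) * XD J j ψ y)
      = ∫ y, -(w y • (c (XD J j (XD J j φ) y) * ψ y) + g j y • (c (XD J j φ y) * ψ y)) := by
    intro j
    have h := weak_complex j hw (hg j) (hgweak j) (θ := fun y => c (XD J j φ y) * ψ y)
      ((cX j).mul hψ) ((cXc j).mul_right)
    have e : ∀ y, XD J j (fun y => c (XD J j φ y) * ψ y) y
        = c (XD J j φ y) * XD J j ψ y + c (XD J j (XD J j φ) y) * ψ y := by
      intro y
      have h1 := XD_mul J j (f := fun y => c (XD J j φ y)) (g := ψ) (p := y)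
        ((cX j).differentiable (by simp) y) (hψ.differentiable (by simp) y)
      rw [XD_clm_comp J j c ((hX j).differentiable (by simp))] at h1
      exact h1
    simp_rw [e, smul_add] at h
    rw [integral_add (i1 j) (i2 j)] at h
    rw [integral_neg, integral_add (i2 j) (i3 j)]
    linear_combination h
  simp_rw [← hcs]
  have i4 : ∀ j ∈ Finset.univ, Integrable fun y =>
      -(w y • (c (XD J j (XD J j φ) y) * ψ y) + g j y • (c (XD J j φ y) * ψ y)) :=
    fun j _ => ((i2 j).add (i3 j)).neg
  rw [Finset.sum_congr rfl fun j _ => step j, ← integral_finsetSum _ i4]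
  refine integral_congr_ae (Eventually.of_forall fun y => ?_)
  have hwy : (w y : ℂ) ≠ 0 := by exact_mod_cast (hw0 y).ne'
  simp only [wLap, LSub, map_sub, map_neg, map_sum, map_smul]
  simp only [Complex.real_smul,
    Finset.sum_neg_distrib, Finset.sum_add_distrib, sub_mul, mul_sub, neg_mul, mul_neg,
    Finset.sum_mul, Finset.mul_sum, neg_add]
  rw [sub_eq_add_neg]
  congr 2
  refine Finset.sum_congr rfl fun j _ => ?_
  push_cast
  field_simp

/-- `eq_zero_of_weak` in terms of the solution itself instead of its product with `w`. -/
theorem eq_zero_of_ortho (hskew : ∀ k, (J k).transpose = -(J k))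
    {g : Fin (2*n) → GrpPt n m → ℝ} (hwm : Measurable w) (hw0 : ∀ y, 0 < w y)
    (hw : LocallyIntegrable w) (hgm : ∀ j, Measurable (g j))
    (hgB : ∀ K : Set (GrpPt n m), IsCompact K →
      ∃ B : ℝ, ∀ᵐ y ∂volume, y ∈ K → ∀ j, |g j y| ≤ B * w y)
    (hgweak : ∀ j, ∀ φ : GrpPt n m → ℝ, ContDiff ℝ (⊤ : ℕ∞) φ → HasCompactSupport φ →
      ∫ y, w y * XD J j φ y = -∫ y, g j y * φ y)
    {s : GrpPt n m → ℝ} (hs : Measurable s) (hs2 : Integrable fun y => w y * s y ^ 2)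
    (horth : ∀ φ : GrpPt n m → ℝ, ContDiff ℝ (⊤ : ℕ∞) φ → HasCompactSupport φ →
      ∫ y, w y * (s y * (wLap J w g φ y + φ y)) = 0) :
    ∀ᵐ y, s y = 0 := by
  have h := eq_zero_of_weak hskew (v := fun y => w y * s y) hwm hw0 hw hgm hgB hgweak
    (hwm.mul hs) ?_ ?_
  · exact h.mono fun y hy => (mul_eq_zero.1 hy).resolve_left (hw0 y).ne'
  · refine hs2.congr (Eventually.of_forall fun y => ?_)
    have := (hw0 y).ne'
    field_simp
  · intro φ hφ hφc
    rw [← horth φ hφ hφc]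
    refine integral_congr_ae (Eventually.of_forall fun y => ?_)
    have := (hw0 y).ne'
    simp only [wLap, smul_eq_mul]
    have e : ∀ j, w y * s y / w y * g j y * XD J j φ y
        = w y * s y * (g j y / w y * XD J j φ y) := by
      intro j
      field_simp
    simp_rw [e, ← Finset.mul_sum]
    ring

theorem wLap_ofReal {g : Fin (2*n) → GrpPt n m → ℝ} {φ : GrpPt n m → ℝ}
    (hφ : ContDiff ℝ (⊤ : ℕ∞) φ) (y : GrpPt n m) :
    wLap J w g (fun p => (φ p : ℂ)) y = ((wLap J w g φ y : ℝ) : ℂ) := by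
  have h1 := congrFun (LSub_clm_comp J Complex.ofRealCLM hφ) y
  have h2 := fun j => congrFun (XD_clm_comp J j Complex.ofRealCLM (hφ.differentiable (by simp))) y
  simp only [Complex.ofRealCLM_apply] at h1 h2
  simp only [wLap, h1, h2]
  push_cast
  simp

end Weighted

/-- If `w` is an admissible weight with `|∇_H w| / ((1+N) w)` essentially bounded, then the
weighted sub-Laplacian `φ ↦ L φ - (∇_H w / w) · ∇_H φ` with domain the (classes of) smooth
compactly supported functions is essentially self-adjoint on `L²(G, w dy)`:
its adjoint is self-adjoint. -/
theorem weighted_subLaplacian_essentially_selfAdjoint_of_bounded (n m : ℕ)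
    (hn : 1 ≤ n) (hm : 1 ≤ m)
    (J : Fin m → Matrix (Fin (2*n)) (Fin (2*n)) ℝ)
    (hskew : ∀ k, (J k).transpose = -(J k))
    (hMet : ∀ t : Fin m → ℝ, t ≠ 0 → IsUnit (∑ k, t k • J k))
    -- `w` is an admissible weight:
    (w : GrpPt n m → ℝ) (hwmeas : Measurable w) (hwpos : ∀ y, 0 < w y)
    (hwloc : ∀ K : Set (GrpPt n m), IsCompact K →
      ∃ C : ℝ, ∀ᵐ y ∂(volume : Measure (GrpPt n m)), y ∈ K → w y ≤ C)
    (hwinvloc : ∀ K : Set (GrpPt n m), IsCompact K →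
      ∃ C : ℝ, ∀ᵐ y ∂(volume : Measure (GrpPt n m)), y ∈ K → (w y)⁻¹ ≤ C)
    -- weak horizontal gradient of `w`, in `L²_loc`:
    (g : Fin (2*n) → GrpPt n m → ℝ) (hgmeas : ∀ j, Measurable (g j))
    (hgL2 : ∀ j, ∀ K : Set (GrpPt n m), IsCompact K →
      MeasureTheory.IntegrableOn (fun y => (g j y)^2) K volume)
    (hgweak : ∀ j, ∀ φ : GrpPt n m → ℝ, ContDiff ℝ (⊤ : ℕ∞) φ → HasCompactSupport φ →
      ∫ y, w y * XD J j φ y = -∫ y, g j y * φ y)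
    -- `|∇_H w| / ((1+N) w)` is essentially bounded:
    (hbound : ∃ C : ℝ, ∀ᵐ y ∂(volume : Measure (GrpPt n m)),
      Real.sqrt (∑ j, (g j y)^2) ≤ C * (1 + kN y) * w y)
    -- the weighted sub-Laplacian with domain `C_c^∞`:
    (T : (MeasureTheory.Lp ℂ 2 (wMeasure w)) →ₗ.[ℂ] (MeasureTheory.Lp ℂ 2 (wMeasure w)))
    (hdom : ∀ u : MeasureTheory.Lp ℂ 2 (wMeasure w),
      u ∈ T.domain ↔ ∃ φ : GrpPt n m → ℂ, ContDiff ℝ (⊤ : ℕ∞) φ ∧ HasCompactSupport φ ∧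
        (u : GrpPt n m → ℂ) =ᵐ[wMeasure w] φ)
    (haction : ∀ (u : T.domain) (φ : GrpPt n m → ℂ),
      ContDiff ℝ (⊤ : ℕ∞) φ → HasCompactSupport φ →
      ((u : MeasureTheory.Lp ℂ 2 (wMeasure w)) : GrpPt n m → ℂ) =ᵐ[wMeasure w] φ →
      (T u : GrpPt n m → ℂ)
        =ᵐ[wMeasure w] fun y => LSub J φ y - ∑ j, (g j y / w y) • XD J j φ y) :
    IsSelfAdjoint T.adjoint := by
  have hw := locallyIntegrable_weight hwmeas hwpos hwloc
  have hgB := gradient_bound hwpos hbound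
  have hg : ∀ j, LocallyIntegrable (g j) := fun j =>
    locallyIntegrable_of_le (hgmeas j) hw fun K hK => by
      obtain ⟨B, hB⟩ := hgB K hK
      exact ⟨B, hB.mono fun y hy hyK => hy hyK j⟩
  have := isFiniteMeasureOnCompacts_wMeasure hw
  have hae : ∀ {p : GrpPt n m → Prop}, (∀ᵐ y ∂(wMeasure w), p y) ↔ ∀ᵐ y, p y :=
    ae_wMeasure hwmeas hwpos
  have haction' : ∀ (u : T.domain) (φ : GrpPt n m → ℂ),
      ContDiff ℝ (⊤ : ℕ∞) φ → HasCompactSupport φ →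
      ((u : Lp ℂ 2 (wMeasure w)) : GrpPt n m → ℂ) =ᵐ[wMeasure w] φ →
      (T u : GrpPt n m → ℂ) =ᵐ[wMeasure w] wLap J w g φ := haction
  have hform : ∀ (x y : T.domain) (φ ψ : GrpPt n m → ℂ), ContDiff ℝ (⊤ : ℕ∞) φ →
      HasCompactSupport φ → ((x : Lp ℂ 2 (wMeasure w)) : GrpPt n m → ℂ) =ᵐ[wMeasure w] φ →
      ContDiff ℝ (⊤ : ℕ∞) ψ → ((y : Lp ℂ 2 (wMeasure w)) : GrpPt n m → ℂ) =ᵐ[wMeasure w] ψ →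
      inner ℂ (T x) (y : Lp ℂ 2 (wMeasure w))
        = ∑ j, ∫ p, w p • (star (XD J j φ p) * XD J j ψ p) := by
    intro x y φ ψ hφ hφc hxφ hψ hyψ
    rw [← green hwpos hw hg hgweak hφ hφc hψ, L2.inner_def,
      ← integral_wMeasure hwmeas hwpos]
    refine integral_congr_ae ?_
    filter_upwards [haction' x φ hφ hφc hxφ, hyψ] with p h1 h2
    rw [h1, h2, RCLike.inner_apply, mul_comm]
    rfl
  refine isSelfAdjoint_adjoint_of_nonneg T ?_ ?_ ?_ ?_
  · refine (Lp.dense_hasCompactSupport_contDiff (F := ℂ) (μ := wMeasure w) (p := 2)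
      (by norm_num)).mono ?_
    rintro u ⟨φ, h1, h2, h3⟩
    exact (hdom u).2 ⟨φ, h3, h2, h1⟩
  · intro x y
    obtain ⟨φ, hφ, hφc, hx⟩ := (hdom x).1 x.2
    obtain ⟨ψ, hψ, hψc, hy⟩ := (hdom y).1 y.2
    rw [hform x y φ ψ hφ hφc hx hψ hy, ← inner_conj_symm, hform y x ψ φ hψ hψc hy hφ hx, map_sum]
    refine Finset.sum_congr rfl fun j _ => ?_
    rw [← integral_conj]
    refine integral_congr_ae (Eventually.of_forall fun p => ?_)
    simp [mul_comm]
  · intro x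
    obtain ⟨φ, hφ, hφc, hx⟩ := (hdom x).1 x.2
    rw [hform x x φ φ hφ hφc hx hφ hx, Complex.re_sum]
    refine Finset.sum_nonneg fun j _ => ?_
    have e : ∀ p, w p • (star (XD J j φ p) * XD J j φ p)
        = ((w p * Complex.normSq (XD J j φ p) : ℝ) : ℂ) := by
      intro p
      rw [mul_comm (star _)]
      simp [Complex.mul_conj]
    simp_rw [e]
    rw [integral_complex_ofReal, Complex.ofReal_re]
    exact integral_nonneg fun p => mul_nonneg (hwpos p).le (Complex.normSq_nonneg _)
  · intro v hv
    have hvm : Measurable (v : GrpPt n m → ℂ) := (Lp.stronglyMeasurable v).measurable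
    have hv2 : Integrable (fun p => w p * ‖v p‖ ^ 2) := by
      have := (memLp_two_iff_integrable_sq_norm (Lp.aestronglyMeasurable v)).1 (Lp.memLp v)
      simpa using (integrable_wMeasure hwmeas hwpos _).1 this
    -- applied to the real and the imaginary part
    have key : ∀ L : ℂ →L[ℝ] ℝ, (∀ z, |L z| ≤ ‖z‖) →
        ∀ᵐ p, L (star (v p)) = 0 := by
      intro L hL
      have hLm : Measurable fun p => L (star (v p)) := by fun_prop
      refine eq_zero_of_ortho hskew hwmeas hwpos hw hgmeas hgB hgweak hLm ?_ ?_
      · refine hv2.mono' (by fun_prop) (Eventually.of_forall fun p => ?_)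
        rw [Real.norm_eq_abs, abs_mul, abs_of_pos (hwpos p), abs_pow]
        have := hL (star (v p))
        rw [norm_star] at this
        have := hwpos p
        gcongr
      · intro φ hφ hφc
        have hφ' : ContDiff ℝ (⊤ : ℕ∞) fun p => (φ p : ℂ) := Complex.ofRealCLM.contDiff.comp hφ
        have hφc' : HasCompactSupport fun p => (φ p : ℂ) :=
          hφc.comp_left (g := fun r : ℝ => (r : ℂ)) Complex.ofReal_zero
        have hmem := hφ'.continuous.memLp_of_hasCompactSupport (p := 2) (μ := wMeasure w) hφc'
        have hco := hmem.coeFn_toLp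
        set x : T.domain := ⟨hmem.toLp _, (hdom _).2 ⟨_, hφ', hφc', hco⟩⟩ with hx
        have hTx := haction' x _ hφ' hφc' hco
        have h0 := hv x
        have hint := L2.integrable_inner (𝕜 := ℂ) v (T x + x)
        have hpt : (fun p => inner ℂ (v p) ((T x + x : Lp ℂ 2 (wMeasure w)) p))
            =ᵐ[wMeasure w] fun p => ((wLap J w g φ p + φ p : ℝ) : ℂ) * star (v p) := by
          filter_upwards [Lp.coeFn_add (T x) (x : Lp ℂ 2 (wMeasure w)), hTx, hco] with p h1 h2 h3
          rw [h1, Pi.add_apply, h2, h3, wLap_ofReal hφ, RCLike.inner_apply, Complex.ofReal_add]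
          rfl
        rw [L2.inner_def, integral_congr_ae hpt, integral_wMeasure hwmeas hwpos] at h0
        have hint' := (integrable_wMeasure hwmeas hwpos _).1 (hint.congr hpt)
        have h3 := congrArg L h0
        rw [map_zero, ← L.integral_comp_comm hint'] at h3
        rw [← h3]
        refine integral_congr_ae (Eventually.of_forall fun p => ?_)
        simp only [map_smul, ← Complex.real_smul, smul_eq_mul]
        ring
    have hre := key Complex.reCLM fun z => Complex.abs_re_le_norm z
    have him := key Complex.imCLM fun z => Complex.abs_im_le_norm z
    refine (Lp.eq_zero_iff_ae_eq_zero).2 (hae.2 ?_)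
    filter_upwards [hre, him] with p h1 h2
    apply star_eq_zero.1
    exact Complex.ext h1 h2

end
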